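/- arXiv:1810.00015 — 4 statements merged into one kernel-verified Lean document; each statement's English description precedes it below -/
import Mathlib

section
/- Let C ⊆ F_q^n be a linear code. There is an injective group homomorphism from AutL_p(C) into the monomial automorphism group AutM(φ(C)) of the concatenated code φ(C) ⊆ F_p^{n₀n} such that, for every element of AutL_p(C) with coordinate permutation π, the coordinate permutation of its image maps each block N_j = {(j−1)n₀+1, …, jn₀} of coordinates onto the block N_{π(j)}; in particular, AutL_p(C) is isomorphic to a subgroup of AutM(φ(C)) acting imprimitively on the coordinates with blocks N_1,…,N_n. -/
open Finset

/-- Monomial automorphisms of a code. -/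
def autMSet {F : Type*} [MonoidWithZero F] {ι : Type*} (C : Set (ι → F)) :
    Set (Equiv.Perm (ι → F)) :=
  {e | (∃ (π : Equiv.Perm ι) (c : ι → F), (∀ i, c i ≠ 0) ∧
        ∀ v i, e v i = c i * v (π⁻¹ i)) ∧ ⇑e '' C = C}

/-- `Fp`-linear automorphisms of a code over a field `Fq` which is an `Fp`-algebra. -/
def autLSet (Fp : Type*) {Fq : Type*} [Field Fp] [Field Fq] [Algebra Fp Fq] {ι : Type*}
    (C : Set (ι → Fq)) : Set (Equiv.Perm (ι → Fq)) :=
  {e | (∃ (π : Equiv.Perm ι) (σ : ι → Equiv.Perm Fq),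
        (∀ i x y, σ i (x + y) = σ i x + σ i y) ∧
        (∀ i (b : Fp) (x : Fq), σ i (algebraMap Fp Fq b * x) = algebraMap Fp Fq b * σ i x) ∧
        ∀ v i, e v i = σ i (v (π⁻¹ i))) ∧ ⇑e '' C = C}

/-- A permutation of `ι → F` which is a monomial map. -/
def IsMonomialPerm {F : Type*} [MonoidWithZero F] {ι : Type*} (g : Equiv.Perm (ι → F)) : Prop :=
  ∃ (π : Equiv.Perm ι) (c : ι → F), (∀ i, c i ≠ 0) ∧ ∀ v i, g v i = c i * v (π⁻¹ i)

theorem IsMonomialPerm.mul {F : Type*} [Field F] {ι : Type*} {g h : Equiv.Perm (ι → F)}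
    (hg : IsMonomialPerm g) (hh : IsMonomialPerm h) : IsMonomialPerm (g * h) := by
  obtain ⟨π, c, hc, hg⟩ := hg
  obtain ⟨ρ, d, hd, hh⟩ := hh
  refine ⟨π * ρ, fun i => c i * d (π⁻¹ i), fun i => mul_ne_zero (hc i) (hd _), fun v i => ?_⟩
  simp [hg, hh, mul_assoc]

/-- The monomial permutation with coordinate permutation `π` and nonzero scalars `c`. -/
theorem exists_perm_monomial {F : Type*} [Field F] {ι : Type*} (π : Equiv.Perm ι) (c : ι → F)
    (hc : ∀ i, c i ≠ 0) :
    ∃ g : Equiv.Perm (ι → F), ∀ v i, g v i = c i * v (π⁻¹ i) := by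
  refine ⟨⟨fun v i => c i * v (π⁻¹ i), fun v i => (c (π i))⁻¹ * v (π i), ?_, ?_⟩, fun v i => rfl⟩
  · intro v
    ext i
    simp [hc]
  · intro v
    ext i
    simp [hc]

/-- The family `b` contains exactly one representative of each one-dimensional
`K`-subspace of `L`. -/
structure IsLineTransversal (K : Type*) {L : Type*} [Field K] [Field L] [Algebra K L]
    {Λ : Type*} (b : Λ → L) : Prop where
  ne_zero : ∀ l, b l ≠ 0
  exists_eq : ∀ y : L, y ≠ 0 → ∃ (c : K) (l : Λ), c ≠ 0 ∧ y = algebraMap K L c * b l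
  unique : ∀ (c c' : K) (l l' : Λ), c ≠ 0 → c' ≠ 0 →
    algebraMap K L c * b l = algebraMap K L c' * b l' → c = c' ∧ l = l'

theorem coprime_geom_quotient {p k : ℕ} (hp : 2 ≤ p) (hcop : Nat.Coprime k (p - 1)) :
    Nat.Coprime ((p ^ k - 1) / (p - 1)) (p - 1) := by
  rw [← Nat.geomSum_eq hp]
  have h : ∑ i ∈ Finset.range k, p ^ i ≡ k [MOD (p - 1)] := by
    have hp1 : p ≡ 1 [MOD (p - 1)] :=
      ((Nat.modEq_iff_dvd' (by omega)).2 dvd_rfl).symm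
    calc ∑ i ∈ Finset.range k, p ^ i ≡ ∑ i ∈ Finset.range k, 1 [MOD (p - 1)] := by
          exact Nat.ModEq.sum fun i _ => by simpa using hp1.pow i
      _ = k := by simp
  rw [Nat.Coprime, h.gcd_eq]
  exact hcop

theorem isLineTransversal_pow {K L : Type*} [Field K] [Field L] [Fintype K] [Fintype L]
    [Algebra K L] {p k m : ℕ} (hcop : Nat.Coprime k (p - 1))
    (hK : Fintype.card K = p) (hL : Fintype.card L = p ^ k) (hm : m = (p ^ k - 1) / (p - 1))
    {ξ : L} (hξ : orderOf ξ = m) :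
    IsLineTransversal K (fun l : Fin m => ξ ^ ((l : ℕ) + 1)) := by
  classical
  have hp : 2 ≤ p := hK ▸ Fintype.one_lt_card
  have hmcop : Nat.Coprime m (p - 1) := hm ▸ coprime_geom_quotient hp hcop
  have hmul : (p - 1) * m = p ^ k - 1 := by
    rw [hm]
    exact Nat.mul_div_cancel' (by simpa using Nat.sub_dvd_pow_sub_pow p 1 k)
  have hq : 1 < p ^ k := hL ▸ Fintype.one_lt_card
  have hm0 : 0 < m := Nat.pos_of_ne_zero fun h => by simp [h] at hmul; omega
  have hξ0 : ξ ≠ 0 := by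
    rintro rfl
    have := pow_orderOf_eq_one (0 : L)
    rw [hξ, zero_pow hm0.ne'] at this
    exact zero_ne_one this
  have huniq : ∀ (c c' : K) (l l' : Fin m), c ≠ 0 → c' ≠ 0 →
      algebraMap K L c * ξ ^ ((l : ℕ) + 1) = algebraMap K L c' * ξ ^ ((l' : ℕ) + 1) →
        c = c' ∧ l = l' := by
    intro c c' l l' hc hc' h
    have hpow : ∀ t : ℕ, (ξ ^ t) ^ m = 1 := fun t => by
      rw [← pow_mul, mul_comm, pow_mul, ← hξ, pow_orderOf_eq_one, one_pow]
    have hcc : c ^ m = c' ^ m := by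
      have := congrArg (· ^ m) h
      simp only [mul_pow, hpow, mul_one, ← map_pow] at this
      exact (algebraMap K L).injective this
    have h1 : (c / c') ^ m = 1 := by
      rw [div_pow, hcc, div_self (pow_ne_zero _ hc')]
    have h2 : (c / c') ^ (p - 1) = 1 := by
      rw [← hK]
      exact FiniteField.pow_card_sub_one_eq_one _ (div_ne_zero hc hc')
    have h3 : c / c' = 1 := by
      simpa [hmcop.gcd_eq_one] using pow_gcd_eq_one.2 ⟨h1, h2⟩
    have hceq : c = c' := (div_eq_one_iff_eq hc').1 h3
    refine ⟨hceq, ?_⟩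
    subst hceq
    have h4 := mul_left_cancel₀ ((map_ne_zero (algebraMap K L)).2 hc) h
    rw [pow_succ, pow_succ] at h4
    have h5 := mul_right_cancel₀ hξ0 h4
    exact Fin.ext (pow_injOn_Iio_orderOf (by simp [hξ]) (by simp [hξ]) h5)
  refine ⟨fun l => pow_ne_zero _ hξ0, fun y hy => ?_, huniq⟩
  let F : Kˣ × Fin m → Lˣ := fun x =>
    Units.map (algebraMap K L).toMonoidHom x.1 * Units.mk0 ξ hξ0 ^ ((x.2 : ℕ) + 1)
  have hF : Function.Bijective F := by
    rw [Fintype.bijective_iff_injective_and_card]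
    constructor
    · rintro ⟨c, l⟩ ⟨c', l'⟩ h
      have h' := congrArg Units.val h
      obtain ⟨h1, h2⟩ := huniq c c' l l' c.ne_zero c'.ne_zero (by simpa [F] using h')
      exact Prod.ext (Units.ext h1) h2
    · simp [Fintype.card_units, hK, hL, hmul]
  obtain ⟨⟨c, l⟩, h⟩ := hF.2 (Units.mk0 y hy)
  exact ⟨c, l, c.ne_zero, by simpa [F] using (congrArg Units.val h).symm⟩

theorem trace_mul_algebraMap_mul {K L : Type*} [Field K] [Field L] [Algebra K L]
    (c : K) (x y : L) :
    Algebra.trace K L (x * (algebraMap K L c * y)) = c * Algebra.trace K L (x * y) := by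
  rw [mul_left_comm, ← Algebra.smul_def, map_smul, smul_eq_mul]

section Trace

variable {K L : Type*} [Field K] [Field L] [Algebra K L] [FiniteDimensional K L]
  [Algebra.IsSeparable K L]

theorem eq_of_forall_trace_mul_eq {y z : L}
    (h : ∀ x, Algebra.trace K L (x * y) = Algebra.trace K L (x * z)) : y = z := by
  rw [← sub_eq_zero]
  refine (traceForm_nondegenerate K L).2 _ fun x => ?_
  simp [Algebra.traceForm_apply, mul_sub, h]

theorem exists_trace_mul_eq (f : L →ₗ[K] K) : ∃ y, ∀ x, f x = Algebra.trace K L (x * y) := by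
  refine ⟨((Algebra.traceForm K L).toDual (traceForm_nondegenerate K L)).symm f, fun x => ?_⟩
  have h := LinearMap.BilinForm.apply_toDual_symm_apply (hB := traceForm_nondegenerate K L) f x
  rw [← h, Algebra.traceForm_apply, mul_comm]

variable {Λ ι : Type*} {b : Λ → L}

/-- The transpose of a `K`-linear permutation of `L` with respect to the trace form
permutes the lines of `L`. -/
theorem IsLineTransversal.exists_transpose (hb : IsLineTransversal K b) (s : Equiv.Perm L)
    (hadd : ∀ x y, s (x + y) = s x + s y)
    (hsmul : ∀ (a : K) (x : L), s (algebraMap K L a * x) = algebraMap K L a * s x) :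
    ∃ (ρ : Λ → Λ) (c : Λ → K), Function.Injective ρ ∧ (∀ l, c l ≠ 0) ∧
      ∀ l x, Algebra.trace K L (s x * b l) = c l * Algebra.trace K L (x * b (ρ l)) := by
  have key : ∀ l, ∃ (l' : Λ) (c : K), c ≠ 0 ∧
      ∀ x, Algebra.trace K L (s x * b l) = c * Algebra.trace K L (x * b l') := by
    intro l
    let S : L →ₗ[K] L := ⟨⟨s, hadd⟩, fun a x => by simp [Algebra.smul_def, hsmul]⟩
    obtain ⟨y, hy⟩ := exists_trace_mul_eq
      ((Algebra.trace K L).comp ((LinearMap.mulRight K (b l)).comp S))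
    replace hy : ∀ x, Algebra.trace K L (s x * b l) = Algebra.trace K L (x * y) := hy
    have hy0 : y ≠ 0 := by
      rintro rfl
      refine hb.ne_zero l (eq_of_forall_trace_mul_eq (K := K) fun x => ?_)
      obtain ⟨x, rfl⟩ := s.surjective x
      simpa using hy x
    obtain ⟨c, l', hc, rfl⟩ := hb.exists_eq y hy0
    refine ⟨l', c, hc, fun x => ?_⟩
    rw [hy, trace_mul_algebraMap_mul]
  choose ρ c hc h using key
  refine ⟨ρ, c, fun l l' hl => ?_, hc, h⟩
  refine (hb.unique (c l') (c l) l l' (hc _) (hc _)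
    (eq_of_forall_trace_mul_eq (K := K) fun x => ?_)).2
  obtain ⟨x, rfl⟩ := s.surjective x
  simp only [trace_mul_algebraMap_mul, h, hl]
  ring

variable {Φ : (ι → L) → (ι × Λ → K)}

theorem IsLineTransversal.injective_concat (hb : IsLineTransversal K b)
    (hΦ : ∀ v jl, Φ v jl = Algebra.trace K L (v jl.1 * b jl.2)) : Function.Injective Φ := by
  intro v w hvw
  ext j
  refine eq_of_forall_trace_mul_eq (K := K) fun x => ?_
  rcases eq_or_ne x 0 with rfl | hx
  · simp
  obtain ⟨c, l, -, rfl⟩ := hb.exists_eq x hx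
  have h := congrFun hvw (j, l)
  rw [hΦ, hΦ] at h
  rw [mul_comm, mul_comm _ (w j), trace_mul_algebraMap_mul, trace_mul_algebraMap_mul, h]

/-- A monomial permutation is determined by its restriction to the image of the
concatenation map. -/
theorem IsLineTransversal.monomial_ext (hb : IsLineTransversal K b)
    (hΦ : ∀ v jl, Φ v jl = Algebra.trace K L (v jl.1 * b jl.2))
    {g h : Equiv.Perm (ι × Λ → K)} (hg : IsMonomialPerm g) (hh : IsMonomialPerm h)
    (hgh : ∀ v, g (Φ v) = h (Φ v)) : g = h := by
  classical
  obtain ⟨π, c, hc, hg⟩ := hg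
  obtain ⟨ρ, d, hd, hh⟩ := hh
  have key : ∀ i, c i = d i ∧ π⁻¹ i = ρ⁻¹ i := by
    intro i
    have hv : ∀ v : ι → L,
        Algebra.trace K L (v (π⁻¹ i).1 * (algebraMap K L (c i) * b (π⁻¹ i).2)) =
          Algebra.trace K L (v (ρ⁻¹ i).1 * (algebraMap K L (d i) * b (ρ⁻¹ i).2)) := by
      intro v
      have := congrFun (hgh v) i
      rw [hg, hh, hΦ, hΦ] at this
      simpa only [trace_mul_algebraMap_mul] using this
    have h1 : (π⁻¹ i).1 = (ρ⁻¹ i).1 := by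
      by_contra hne
      refine mul_ne_zero ((map_ne_zero (algebraMap K L)).2 (hc i)) (hb.ne_zero (π⁻¹ i).2)
        (eq_of_forall_trace_mul_eq (K := K) fun x => ?_)
      have := hv (Pi.single (π⁻¹ i).1 x)
      rwa [Pi.single_eq_same, Pi.single_eq_of_ne (Ne.symm hne), zero_mul, ← mul_zero x] at this
    have h2 := hb.unique _ _ _ _ (hc i) (hd i)
      (eq_of_forall_trace_mul_eq (K := K) fun x => by simpa using hv fun _ => x)
    exact ⟨h2.1, Prod.ext h1 h2.2⟩
  ext v i
  rw [hg, hh, (key i).1, (key i).2]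

/-- A `K`-linear monomial permutation of `ι → L` is carried by the concatenation map to a
monomial permutation respecting the blocks. -/
theorem IsLineTransversal.exists_monomial_lift [Finite ι] [Finite Λ] (hb : IsLineTransversal K b)
    (hΦ : ∀ v jl, Φ v jl = Algebra.trace K L (v jl.1 * b jl.2))
    {e : Equiv.Perm (ι → L)} (π : Equiv.Perm ι) (σ : ι → Equiv.Perm L)
    (hadd : ∀ i x y, σ i (x + y) = σ i x + σ i y)
    (hsmul : ∀ i (a : K) (x : L), σ i (algebraMap K L a * x) = algebraMap K L a * σ i x)
    (he : ∀ v i, e v i = σ i (v (π⁻¹ i))) :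
    ∃ (g : Equiv.Perm (ι × Λ → K)) (π' : Equiv.Perm (ι × Λ)) (c : ι × Λ → K),
      (∀ jl, c jl ≠ 0) ∧ (∀ w jl, g w jl = c jl * w (π'⁻¹ jl)) ∧
      (∀ jl, (π' jl).1 = π jl.1) ∧ ∀ v, Φ (e v) = g (Φ v) := by
  choose ρ c hρ hc h using fun j => hb.exists_transpose (σ j) (hadd j) (hsmul j)
  let τ : ι × Λ → ι × Λ := fun jl => (π⁻¹ jl.1, ρ jl.1 jl.2)
  have hτ : Function.Injective τ := by
    rintro ⟨j, l⟩ ⟨j', l'⟩ hjl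
    obtain ⟨h1, h2⟩ := Prod.ext_iff.1 hjl
    obtain rfl : j = j' := π⁻¹.injective h1
    exact Prod.ext rfl (hρ j h2)
  let T : Equiv.Perm (ι × Λ) := Equiv.ofBijective τ (Finite.injective_iff_bijective.1 hτ)
  obtain ⟨g, hg⟩ := exists_perm_monomial T⁻¹ (fun jl => c jl.1 jl.2) fun jl => hc _ _
  refine ⟨g, T⁻¹, _, fun jl => hc _ _, hg, fun jl => ?_, fun v => ?_⟩
  · obtain ⟨jl, rfl⟩ := T.surjective jl
    simp [T, τ]
  · ext jl
    rw [hg, hΦ, hΦ, he, h, inv_inv]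
    rfl

end Trace

/-- Let `C ⊆ F_q^n` be a linear code and `φ` the concatenation map of the
context.  There is an injective group homomorphism from `AutL_p(C)` into `AutM(φ(C))`
such that, for every element of `AutL_p(C)` with coordinate permutation `π`, the
coordinate permutation of its image maps each block `N_j = {j} × {1,…,n₀}` of coordinates
onto the block `N_{π(j)}`; in particular `AutL_p(C)` is isomorphic to a subgroup of
`AutM(φ(C))` acting imprimitively on the coordinates with blocks `N_1, …, N_n`. -/
theorem stmt_5 (p k n₀ : ℕ) (hk : 1 ≤ k) (hcop : Nat.Coprime k (p - 1))
    (Fp Fq : Type) [Field Fp] [Field Fq] [Fintype Fp] [Fintype Fq]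
    [DecidableEq Fp] [DecidableEq Fq] [Algebra Fp Fq]
    (hcp : Fintype.card Fp = p) (hcq : Fintype.card Fq = p ^ k)
    (hn₀ : n₀ = (p ^ k - 1) / (p - 1))
    (ξ : Fq) (hξ : orderOf ξ = n₀)
    (n : ℕ) (hn : 1 ≤ n)
    (Φ : (Fin n → Fq) → (Fin n × Fin n₀ → Fp))
    (hΦ : ∀ (v : Fin n → Fq) (jl : Fin n × Fin n₀),
      Φ v jl = Algebra.trace Fp Fq (v jl.1 * ξ ^ ((jl.2 : ℕ) + 1)))
    (C : Submodule Fq (Fin n → Fq)) :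
    ∃ f : Equiv.Perm (Fin n → Fq) → Equiv.Perm (Fin n × Fin n₀ → Fp),
      Set.MapsTo f (autLSet Fp (C : Set (Fin n → Fq)))
        (autMSet (Φ '' (C : Set (Fin n → Fq)))) ∧
      Set.InjOn f (autLSet Fp (C : Set (Fin n → Fq))) ∧
      (∀ e₁ ∈ autLSet Fp (C : Set (Fin n → Fq)), ∀ e₂ ∈ autLSet Fp (C : Set (Fin n → Fq)),
        f (e₁ * e₂) = f e₁ * f e₂) ∧
      ∀ e ∈ autLSet Fp (C : Set (Fin n → Fq)),
        ∀ (π : Equiv.Perm (Fin n)) (σ : Fin n → Equiv.Perm Fq),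
          ((∀ i x y, σ i (x + y) = σ i x + σ i y) ∧
           (∀ i (b : Fp) (x : Fq), σ i (algebraMap Fp Fq b * x) = algebraMap Fp Fq b * σ i x) ∧
           (∀ v i, e v i = σ i (v (π⁻¹ i)))) →
          ∃ (π' : Equiv.Perm (Fin n × Fin n₀)) (cst : Fin n × Fin n₀ → Fp),
            (∀ jl, cst jl ≠ 0) ∧
            (∀ w jl, f e w jl = cst jl * w (π'⁻¹ jl)) ∧
            ∀ jl : Fin n × Fin n₀, (π' jl).1 = π jl.1 := by
  have hb := isLineTransversal_pow hcop hcp hcq hn₀ hξ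
  have hex : ∀ e ∈ autLSet Fp (C : Set (Fin n → Fq)),
      ∃ g, IsMonomialPerm g ∧ ∀ v, Φ (e v) = g (Φ v) := by
    rintro e ⟨⟨π, σ, hadd, hsmul, he⟩, -⟩
    obtain ⟨g, π', c, hc, hg, -, h⟩ := hb.exists_monomial_lift hΦ π σ hadd hsmul he
    exact ⟨g, ⟨π', c, hc, hg⟩, h⟩
  choose! f hmon hf using hex
  refine ⟨f, fun e he => ⟨hmon e he, ?_⟩, fun e he e' he' h => ?_, fun e₁ h₁ e₂ h₂ => ?_,
    fun e he π σ ⟨hadd, hsmul, hσ⟩ => ?_⟩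
  · rw [Set.image_image]
    simp only [← hf e he]
    rw [← Set.image_image Φ e, he.2]
  · ext1 v
    exact hb.injective_concat hΦ (by rw [hf e he, hf e' he', h])
  · have h₁₂ : e₁ * e₂ ∈ autLSet Fp (C : Set (Fin n → Fq)) := by
      obtain ⟨⟨π₁, σ₁, ha₁, hs₁, he₁⟩, hC₁⟩ := h₁
      obtain ⟨⟨π₂, σ₂, ha₂, hs₂, he₂⟩, hC₂⟩ := h₂
      refine ⟨⟨π₁ * π₂, fun i => σ₁ i * σ₂ (π₁⁻¹ i), ?_, ?_, ?_⟩, ?_⟩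
      · simp [ha₁, ha₂]
      · simp [hs₁, hs₂]
      · simp [he₁, he₂]
      · rw [Equiv.Perm.coe_mul, Set.image_comp, hC₂, hC₁]
    refine hb.monomial_ext hΦ (hmon _ h₁₂) ((hmon _ h₁).mul (hmon _ h₂)) fun v => ?_
    rw [← hf _ h₁₂, Equiv.Perm.mul_apply, Equiv.Perm.mul_apply, hf _ h₁, hf _ h₂]
  · obtain ⟨g, π', c, hc, hg, hπ, h⟩ := hb.exists_monomial_lift hΦ π σ hadd hsmul hσ
    have hfg : f e = g := hb.monomial_ext hΦ (hmon e he) ⟨π', c, hc, hg⟩ fun v => by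
      rw [← hf e he, h]
    exact ⟨π', c, hc, fun w jl => by rw [hfg, hg], hπ⟩
end

section
/- Let m ≥ 1 and q = 2^m. The binary code K_q^⊥ = {(Tr_{q²/2}(δα^l) + Tr_{q/2}(cθ^l))_{l=1,…,q²−1} : c ∈ F_q, δ ∈ F_{q²}} ⊆ F_2^{q²−1} has weight distribution: one codeword of weight 0, exactly q(q²−1)/2 codewords of weight (q²−q)/2, exactly q²−1 codewords of weight q²/2, and exactly (q³−2q²+q)/2 codewords of weight (q²+q)/2. -/
open Finset

namespace Kasami

/-- A nonzero multiple of the absolute trace takes the value `1` on half of a finite field of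
characteristic two. -/
theorem two_mul_card_trace_mul_ne_zero {L : Type*} [Field L] [Fintype L] [Algebra (ZMod 2) L]
    {a : L} (ha : a ≠ 0) :
    2 * #{x : L | Algebra.trace (ZMod 2) L (a * x) ≠ 0} = Fintype.card L := by
  obtain ⟨b, hb⟩ : ∃ b : L, Algebra.trace (ZMod 2) L (a * b) ≠ 0 := by
    by_contra! h
    exact ha ((traceForm_nondegenerate (ZMod 2) L).1 a fun x => by
      simpa [Algebra.traceForm_apply] using h x)
  have hflip : #{x : L | Algebra.trace (ZMod 2) L (a * x) ≠ 0} =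
      #{x : L | ¬ Algebra.trace (ZMod 2) L (a * x) ≠ 0} := by
    refine card_equiv (Equiv.addRight b) fun x => ?_
    simp only [mem_filter, mem_univ, true_and, Equiv.coe_addRight, mul_add, map_add]
    generalize Algebra.trace (ZMod 2) L (a * x) = s at *
    generalize Algebra.trace (ZMod 2) L (a * b) = t at *
    revert s t
    decide
  have := card_filter_add_card_filter_not (s := (univ : Finset L))
    (fun x => Algebra.trace (ZMod 2) L (a * x) ≠ 0)
  rw [card_univ] at this
  omega

section Quadratic

variable {F K : Type*} [Field F] [Field K] [Fintype F] [Fintype K] [Algebra F K]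

theorem finrank_eq_two (hcK : Fintype.card K = Fintype.card F ^ 2) : Module.finrank F K = 2 :=
  Nat.pow_right_injective (Fintype.one_lt_card (α := F))
    ((Module.card_eq_pow_finrank (K := F) (V := K)).symm.trans hcK)

theorem algebraMap_norm (hcK : Fintype.card K = Fintype.card F ^ 2) (x : K) :
    algebraMap F K (Algebra.norm F x) = x * x ^ Fintype.card F := by
  simp [FiniteField.algebraMap_norm_eq_prod_pow, finrank_eq_two hcK, prod_range_succ]

theorem algebraMap_trace (hcK : Fintype.card K = Fintype.card F ^ 2) (x : K) :
    algebraMap F K (Algebra.trace F K x) = x + x ^ Fintype.card F := by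
  simp [FiniteField.algebraMap_trace_eq_sum_pow, finrank_eq_two hcK, sum_range_succ]

theorem norm_add (hcK : Fintype.card K = Fintype.card F ^ 2) (x y : K) :
    Algebra.norm F (x + y) = Algebra.norm F x + Algebra.norm F y +
      Algebra.trace F K (x * y ^ Fintype.card F) := by
  have hadd : (x + y) ^ Fintype.card F = x ^ Fintype.card F + y ^ Fintype.card F :=
    map_add (FiniteField.frobeniusAlgHom F K) x y
  have hy : (y ^ Fintype.card F) ^ Fintype.card F = y := by
    rw [← pow_mul, ← sq, ← hcK, FiniteField.pow_card]
  apply (algebraMap F K).injective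
  simp only [map_add, algebraMap_norm hcK, algebraMap_trace hcK, hadd, mul_pow, hy]
  ring

theorem card_norm_fiber (hcK : Fintype.card K = Fintype.card F ^ 2) [DecidableEq F]
    {u : F} (hu : u ≠ 0) :
    #{x : K | Algebra.norm F x = u} = Fintype.card F + 1 := by
  classical
  have heq : ∀ v ∈ univ.erase (0 : F),
      #{x ∈ univ.erase (0 : K) | Algebra.norm F x = v} = #{x : K | Algebra.norm F x = u} := by
    intro v hv
    have hv0 : v ≠ 0 := ne_of_mem_erase hv
    obtain ⟨y, hy⟩ := FiniteField.norm_surjective F K (u / v)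
    have hy0 : y ≠ 0 := by
      rintro rfl
      rw [Algebra.norm_zero] at hy
      exact div_ne_zero hu hv0 hy.symm
    refine card_equiv (Equiv.mulRight₀ y hy0) fun x => ?_
    have happ : Equiv.mulRight₀ y hy0 x = x * y := rfl
    simp only [mem_filter, mem_erase, mem_univ, and_true, true_and, happ, map_mul, hy]
    constructor
    · rintro ⟨-, rfl⟩
      field_simp
    · intro h
      have hx : Algebra.norm F x = v := by
        field_simp at h
        exact h
      refine ⟨?_, hx⟩
      rintro rfl
      exact hv0 (by rw [← hx, Algebra.norm_zero])
  have hsum := card_eq_sum_card_fiberwise (s := univ.erase (0 : K)) (t := univ.erase (0 : F))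
    (f := Algebra.norm F) fun x hx => by simpa using hx
  rw [sum_congr rfl heq, sum_const, card_erase_of_mem (mem_univ _), card_erase_of_mem (mem_univ _),
    card_univ, card_univ, hcK, smul_eq_mul] at hsum
  have h1 : 0 < Fintype.card F - 1 := Nat.sub_pos_of_lt Fintype.one_lt_card
  refine Nat.eq_of_mul_eq_mul_left h1 (hsum.symm.trans ?_)
  rw [mul_comm, ← Nat.sq_sub_sq, one_pow]

theorem card_filter_norm (hcK : Fintype.card K = Fintype.card F ^ 2) (P : F → Prop)
    [DecidablePred P] (h0 : ¬ P 0) :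
    #{x : K | P (Algebra.norm F x)} = (Fintype.card F + 1) * #{u : F | P u} := by
  classical
  have hsum := card_eq_sum_card_fiberwise (s := ({x : K | P (Algebra.norm F x)} : Finset K))
    (t := ({u : F | P u} : Finset F)) (f := Algebra.norm F) fun x hx => by simpa using hx
  rw [hsum, mul_comm, ← smul_eq_mul, ← sum_const]
  refine sum_congr rfl fun u hu => ?_
  have hPu : P u := by simpa using hu
  rw [← card_norm_fiber hcK (u := u) (by rintro rfl; exact h0 hPu), filter_filter]
  congr 1
  ext x
  simp only [mem_filter, mem_univ, true_and, and_iff_right_iff_imp]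
  rintro rfl
  exact hPu

theorem two_mul_card_trace_mul_norm_ne_zero [Algebra (ZMod 2) F]
    (hcK : Fintype.card K = Fintype.card F ^ 2) {c : F} (hc : c ≠ 0) :
    2 * #{x : K | Algebra.trace (ZMod 2) F (c * Algebra.norm F x) ≠ 0} =
      (Fintype.card F + 1) * Fintype.card F := by
  rw [card_filter_norm hcK (fun u => Algebra.trace (ZMod 2) F (c * u) ≠ 0) (by simp),
    mul_left_comm, two_mul_card_trace_mul_ne_zero hc]

/-- The number of parameters `(c, δ)` with `c ≠ 0` whose completed square has constant term `1`. -/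
theorem two_mul_card_trace_ne_zero [DecidableEq F] [Algebra (ZMod 2) F]
    (hcK : Fintype.card K = Fintype.card F ^ 2) :
    2 * #{p : F × K | p.1 ≠ 0 ∧ Algebra.trace (ZMod 2) F (p.1⁻¹ * Algebra.norm F p.2) ≠ 0} =
      Fintype.card F * (Fintype.card F ^ 2 - 1) := by
  classical
  have hfib := card_eq_sum_card_fiberwise (f := Prod.fst) (t := univ.erase (0 : F))
    (s := ({p : F × K | p.1 ≠ 0 ∧
      Algebra.trace (ZMod 2) F (p.1⁻¹ * Algebra.norm F p.2) ≠ 0} : Finset (F × K)))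
    fun p hp => by
      simp only [mem_coe, mem_filter] at hp
      simpa using hp.2.1
  have hterm : ∀ c ∈ univ.erase (0 : F),
      2 * #{p ∈ ({p : F × K | p.1 ≠ 0 ∧
        Algebra.trace (ZMod 2) F (p.1⁻¹ * Algebra.norm F p.2) ≠ 0} : Finset (F × K)) | p.1 = c} =
      (Fintype.card F + 1) * Fintype.card F := by
    intro c hc
    have hc0 : c ≠ 0 := ne_of_mem_erase hc
    rw [← two_mul_card_trace_mul_norm_ne_zero (K := K) hcK (inv_ne_zero hc0)]
    congr 1
    refine card_bij' (fun p _ => p.2) (fun δ _ => (c, δ)) ?_ ?_ ?_ ?_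
    · rintro ⟨c', δ⟩ hp
      simp only [mem_filter, mem_univ, true_and] at hp ⊢
      obtain ⟨⟨-, h⟩, rfl⟩ := hp
      exact h
    · intro δ hδ
      simpa [hc0] using hδ
    · rintro ⟨c', δ⟩ hp
      simp only [mem_filter] at hp
      rw [← hp.2]
    · intro δ _
      rfl
  rw [hfib, mul_sum, sum_congr rfl hterm, sum_const, card_erase_of_mem (mem_univ _), card_univ,
    smul_eq_mul, ← one_pow 2, Nat.sq_sub_sq, one_pow]
  ring

end Quadratic

section Weight

variable {F K : Type*} [Field F] [Field K] [Algebra (ZMod 2) F] [Algebra (ZMod 2) K] [Algebra F K]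

/-- The quadratic function whose values on `Kˣ` are the coordinates of the codeword with
parameters `(c, δ)`. -/
noncomputable def form (p : F × K) (x : K) : ZMod 2 :=
  Algebra.trace (ZMod 2) K (p.2 * x) + Algebra.trace (ZMod 2) F (p.1 * Algebra.norm F x)

theorem form_sub (p p' : F × K) (x : K) : form (p - p') x = form p x - form p' x := by
  simp only [form, Prod.fst_sub, Prod.snd_sub, sub_mul, map_sub]
  ring

variable [Fintype K]

/-- The number of points at which `form p` does not vanish. -/
noncomputable def weight (p : F × K) : ℕ := #{x : K | form p x ≠ 0}

theorem form_zero (p : F × K) : form p 0 = 0 := by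
  simp [form, Algebra.norm_zero]

theorem weight_zero : weight (0 : F × K) = 0 := by
  simp [weight, form]

theorem two_mul_weight_of_fst_eq_zero {δ : K} (hδ : δ ≠ 0) :
    2 * weight ((0, δ) : F × K) = Fintype.card K := by
  simpa [weight, form] using two_mul_card_trace_mul_ne_zero hδ

variable [Fintype F] [IsScalarTower (ZMod 2) F K]

/-- Completing the square. -/
theorem form_eq (hcK : Fintype.card K = Fintype.card F ^ 2) {c : F} (hc : c ≠ 0) (δ : K) :
    ∃ y : K, ∀ x : K, form (c, δ) x = Algebra.trace (ZMod 2) F (c * Algebra.norm F (x + y)) +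
      Algebra.trace (ZMod 2) F (c⁻¹ * Algebra.norm F δ) := by
  have hpow : ∀ z : K, (z ^ Fintype.card F) ^ Fintype.card F = z := fun z => by
    rw [← pow_mul, ← sq, ← hcK, FiniteField.pow_card]
  have hcq : algebraMap F K c ^ Fintype.card F = algebraMap F K c := by
    rw [← map_pow, FiniteField.pow_card]
  have hc' : algebraMap F K c ≠ 0 := by simpa using hc
  refine ⟨(δ / algebraMap F K c) ^ Fintype.card F, fun x => ?_⟩
  have hnorm : c * Algebra.norm F ((δ / algebraMap F K c) ^ Fintype.card F) =
      c⁻¹ * Algebra.norm F δ := by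
    apply (algebraMap F K).injective
    simp only [map_mul, map_inv₀, algebraMap_norm hcK, hpow, div_pow, hcq]
    field_simp
  have htrace : Algebra.trace (ZMod 2) F (c * Algebra.trace F K (x * (δ / algebraMap F K c))) =
      Algebra.trace (ZMod 2) K (δ * x) := by
    rw [← smul_eq_mul, ← map_smul, Algebra.trace_trace, Algebra.smul_def]
    congr 1
    field_simp
  simp only [form]
  rw [norm_add hcK, hpow, mul_add, mul_add, hnorm, map_add, map_add, htrace]
  generalize Algebra.trace (ZMod 2) K (δ * x) = r
  generalize Algebra.trace (ZMod 2) F (c * Algebra.norm F x) = s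
  generalize Algebra.trace (ZMod 2) F (c⁻¹ * Algebra.norm F δ) = t
  revert r s t
  decide

theorem two_mul_weight_of_trace_eq_zero (hcK : Fintype.card K = Fintype.card F ^ 2) {c : F}
    (hc : c ≠ 0) {δ : K} (h : Algebra.trace (ZMod 2) F (c⁻¹ * Algebra.norm F δ) = 0) :
    2 * weight (c, δ) = (Fintype.card F + 1) * Fintype.card F := by
  obtain ⟨y, hy⟩ := form_eq hcK hc δ
  rw [← two_mul_card_trace_mul_norm_ne_zero hcK hc, weight]
  congr 1
  refine card_equiv (Equiv.addRight y) fun x => ?_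
  simp [hy, h]

theorem two_mul_weight_of_trace_ne_zero (hcK : Fintype.card K = Fintype.card F ^ 2) {c : F}
    (hc : c ≠ 0) {δ : K} (h : Algebra.trace (ZMod 2) F (c⁻¹ * Algebra.norm F δ) ≠ 0) :
    2 * weight (c, δ) + Fintype.card F = Fintype.card F ^ 2 := by
  obtain ⟨y, hy⟩ := form_eq hcK hc δ
  have hcard : weight (c, δ) =
      #{x : K | ¬ Algebra.trace (ZMod 2) F (c * Algebra.norm F x) ≠ 0} := by
    refine card_equiv (Equiv.addRight y) fun x => ?_
    simp only [mem_filter, mem_univ, true_and, hy, Equiv.coe_addRight]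
    generalize Algebra.trace (ZMod 2) F (c * Algebra.norm F (x + y)) = s
    generalize Algebra.trace (ZMod 2) F (c⁻¹ * Algebra.norm F δ) = t at h ⊢
    clear hy
    revert s t
    decide
  have hsum := card_filter_add_card_filter_not (s := (univ : Finset K))
    (fun x => Algebra.trace (ZMod 2) F (c * Algebra.norm F x) ≠ 0)
  rw [← hcard, card_univ, hcK] at hsum
  have := two_mul_card_trace_mul_norm_ne_zero (K := K) hcK hc
  nlinarith

end Weight

section Code

variable {F K : Type*} [Field F] [Field K] [Fintype K]
  [Algebra (ZMod 2) F] [Algebra (ZMod 2) K] [Algebra F K]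

/-- The codeword with parameters `p = (c, δ)`, of length `n`. -/
noncomputable def codeword (α : K) (n : ℕ) (p : F × K) : Fin n → ZMod 2 :=
  fun l => form p (α ^ ((l : ℕ) + 1))

theorem hammingNorm_codeword {α : K} {n : ℕ} (hn : n + 1 = Fintype.card K)
    (hα : orderOf α = n) (p : F × K) : hammingNorm (codeword α n p) = weight p := by
  classical
  have hn0 : 0 < n := by
    have := Fintype.one_lt_card (α := K)
    omega
  have hα0 : α ≠ 0 := by
    rintro rfl
    rw [orderOf_zero] at hα
    omega
  have hinj : Function.Injective fun l : Fin n => α ^ ((l : ℕ) + 1) := by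
    intro l l' h
    simp only [pow_succ] at h
    have h' := mul_right_cancel₀ hα0 h
    exact Fin.ext (pow_injOn_Iio_orderOf (by simp [hα]) (by simp [hα]) h')
  have himage : univ.image (fun l : Fin n => α ^ ((l : ℕ) + 1)) = univ.erase (0 : K) := by
    apply eq_of_subset_of_card_le
    · intro x hx
      simp only [mem_image, mem_univ, true_and] at hx
      obtain ⟨l, rfl⟩ := hx
      simp [hα0]
    · rw [card_image_of_injective _ hinj, card_erase_of_mem (mem_univ _), card_univ, ← hn]
      simp
  rw [hammingNorm, weight, ← card_image_of_injective _ hinj]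
  congr 1
  ext x
  simp only [mem_image, mem_filter, mem_univ, true_and]
  constructor
  · rintro ⟨l, hl, rfl⟩
    exact hl
  · intro hx
    have hx0 : x ∈ univ.erase (0 : K) := by
      simp only [mem_erase, mem_univ, and_true]
      rintro rfl
      exact hx (form_zero p)
    rw [← himage, mem_image] at hx0
    obtain ⟨l, -, rfl⟩ := hx0
    exact ⟨l, hx, rfl⟩

variable [Fintype F] [IsScalarTower (ZMod 2) F K]

theorem weight_cases (hcK : Fintype.card K = Fintype.card F ^ 2) (p : F × K) :
    (p = 0 ∧ weight p = 0) ∨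
    ((p.1 = 0 ∧ p.2 ≠ 0) ∧ 2 * weight p = Fintype.card F ^ 2) ∨
    ((p.1 ≠ 0 ∧ Algebra.trace (ZMod 2) F (p.1⁻¹ * Algebra.norm F p.2) ≠ 0) ∧
      2 * weight p + Fintype.card F = Fintype.card F ^ 2) ∨
    ((p.1 ≠ 0 ∧ Algebra.trace (ZMod 2) F (p.1⁻¹ * Algebra.norm F p.2) = 0) ∧
      2 * weight p = Fintype.card F ^ 2 + Fintype.card F) := by
  obtain ⟨c, δ⟩ := p
  by_cases hc : c = 0
  · subst hc
    by_cases hδ : δ = 0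
    · subst hδ
      exact Or.inl ⟨rfl, weight_zero⟩
    · exact Or.inr (Or.inl ⟨⟨rfl, hδ⟩, hcK ▸ two_mul_weight_of_fst_eq_zero hδ⟩)
  · by_cases h : Algebra.trace (ZMod 2) F (c⁻¹ * Algebra.norm F δ) = 0
    · exact Or.inr (Or.inr (Or.inr ⟨⟨hc, h⟩, by
        rw [two_mul_weight_of_trace_eq_zero hcK hc h]; ring⟩))
    · exact Or.inr (Or.inr (Or.inl ⟨⟨hc, h⟩, two_mul_weight_of_trace_ne_zero hcK hc h⟩))

theorem weight_eq_zero_iff (hcK : Fintype.card K = Fintype.card F ^ 2) (p : F × K) :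
    weight p = 0 ↔ p = 0 := by
  have h1 := Fintype.one_lt_card (α := F)
  have h2 : Fintype.card F < Fintype.card F ^ 2 := by nlinarith
  refine ⟨fun h => ?_, fun h => h ▸ weight_zero⟩
  rcases weight_cases hcK p with h' | h' | h' | h'
  · exact h'.1
  all_goals omega

theorem codeword_injective (hcK : Fintype.card K = Fintype.card F ^ 2) {α : K} {n : ℕ}
    (hn : n + 1 = Fintype.card K) (hα : orderOf α = n) :
    Function.Injective (codeword (F := F) α n) := by
  intro p p' h
  rw [← sub_eq_zero, ← weight_eq_zero_iff hcK, ← hammingNorm_codeword hn hα, hammingNorm_eq_zero]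
  ext l
  simp only [codeword, form_sub, Pi.zero_apply]
  exact sub_eq_zero.2 (congrFun h l)

end Code

end Kasami

open Kasami

/-- Let `m ≥ 1`, `q = 2^m`, and let
`K_q^⊥ = {(Tr_{q²/2}(δα^l) + Tr_{q/2}(cθ^l))_{l=1,…,q²−1} : c ∈ F_q, δ ∈ F_{q²}}` be the
dual of the Kasami code.  Its weight distribution is: one codeword of weight `0`, exactly
`q(q²−1)/2` codewords of weight `(q²−q)/2`, exactly `q²−1` codewords of weight `q²/2`,
and exactly `(q³−2q²+q)/2` codewords of weight `(q²+q)/2`. -/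
theorem stmt_8 (m q : ℕ) (hm : 1 ≤ m) (hq : q = 2 ^ m)
    (F K : Type) [Field F] [Field K] [Fintype F] [Fintype K]
    [Algebra (ZMod 2) F] [Algebra (ZMod 2) K] [Algebra F K] [IsScalarTower (ZMod 2) F K]
    (hcF : Fintype.card F = q) (hcK : Fintype.card K = q ^ 2)
    (α : K) (hα : orderOf α = q ^ 2 - 1)
    (θ : F) (hθ : algebraMap F K θ = α ^ (q + 1))
    (Kdual : Set (Fin (q ^ 2 - 1) → ZMod 2))
    (hK : Kdual = {w | ∃ (c : F) (δ : K), ∀ l : Fin (q ^ 2 - 1),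
        w l = Algebra.trace (ZMod 2) K (δ * α ^ ((l : ℕ) + 1))
            + Algebra.trace (ZMod 2) F (c * θ ^ ((l : ℕ) + 1))}) :
    {w ∈ Kdual | hammingNorm w = 0}.ncard = 1 ∧
    {w ∈ Kdual | hammingNorm w = (q ^ 2 - q) / 2}.ncard = q * (q ^ 2 - 1) / 2 ∧
    {w ∈ Kdual | hammingNorm w = q ^ 2 / 2}.ncard = q ^ 2 - 1 ∧
    {w ∈ Kdual | hammingNorm w = (q ^ 2 + q) / 2}.ncard = (q ^ 3 - 2 * q ^ 2 + q) / 2 ∧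
    Kdual.ncard = 1 + q * (q ^ 2 - 1) / 2 + (q ^ 2 - 1) + (q ^ 3 - 2 * q ^ 2 + q) / 2 := by
  subst hcF
  have hq1 := Fintype.one_lt_card (α := F)
  have hQ : Fintype.card F < Fintype.card F ^ 2 := by nlinarith
  have heven : 2 ∣ Fintype.card F := hq ▸ dvd_pow_self 2 (by omega)
  have heven2 : 2 ∣ Fintype.card F ^ 2 := heven.trans (dvd_pow_self _ two_ne_zero)
  have hn : Fintype.card F ^ 2 - 1 + 1 = Fintype.card K := by omega
  have hθ' : θ = Algebra.norm F α := (algebraMap F K).injective <| by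
    rw [hθ, algebraMap_norm hcK, pow_succ']
  have hrange : Kdual = Set.range (codeword (F := F) α (Fintype.card F ^ 2 - 1)) := by
    rw [hK]
    ext w
    simp only [Set.mem_ofPred_eq, Set.mem_range, Prod.exists, funext_iff, codeword, form, map_pow,
      ← hθ', eq_comm]
  have hinj := codeword_injective hcK hn hα
  have hcount : ∀ (k : ℕ) (P : F × K → Prop) [DecidablePred P], (∀ p, weight p = k ↔ P p) →
      {w ∈ Kdual | hammingNorm w = k}.ncard = #{p | P p} := by
    intro k P _ hP
    rw [← Set.ncard_coe_finset, ← Set.ncard_image_of_injective _ hinj, hrange]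
    congr 1
    ext w
    simp only [Set.mem_ofPred_eq, Set.mem_range, Set.mem_image, coe_filter, mem_univ, true_and]
    constructor
    · rintro ⟨⟨p, rfl⟩, h⟩
      exact ⟨p, (hP p).1 (by rwa [hammingNorm_codeword hn hα] at h), rfl⟩
    · rintro ⟨p, h, rfl⟩
      exact ⟨⟨p, rfl⟩, by rwa [hammingNorm_codeword hn hα, hP]⟩
  classical
  have htri := weight_cases hcK
  have hzero : #{p : F × K | p.1 = 0} = Fintype.card F ^ 2 := by
    rw [show ({p : F × K | p.1 = 0} : Finset (F × K)) = {0} ×ˢ univ by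
      ext ⟨c, δ⟩; simp [-singleton_product]]
    simp [hcK]
  have hmid : #{p : F × K | p.1 = 0 ∧ p.2 ≠ 0} = Fintype.card F ^ 2 - 1 := by
    rw [show ({p : F × K | p.1 = 0 ∧ p.2 ≠ 0} : Finset (F × K)) = {0} ×ˢ univ.erase 0 by
      ext ⟨c, δ⟩; simp [-singleton_product]]
    simp [card_erase_of_mem, hcK]
  have hlow := two_mul_card_trace_ne_zero hcK
  have hprod : Fintype.card (F × K) = Fintype.card F ^ 3 := by
    rw [Fintype.card_prod, hcK]
    ring
  have hsum : Fintype.card F ^ 2 +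
      (#{p : F × K | p.1 ≠ 0 ∧ Algebra.trace (ZMod 2) F (p.1⁻¹ * Algebra.norm F p.2) ≠ 0} +
        #{p : F × K | p.1 ≠ 0 ∧ Algebra.trace (ZMod 2) F (p.1⁻¹ * Algebra.norm F p.2) = 0}) =
      Fintype.card F ^ 3 := by
    rw [← hprod, ← hzero, ← card_univ,
      ← card_filter_add_card_filter_not (s := univ) (fun p : F × K => p.1 = 0),
      ← card_filter_add_card_filter_not (s := univ.filter fun p : F × K => ¬ p.1 = 0)
        (fun p => Algebra.trace (ZMod 2) F (p.1⁻¹ * Algebra.norm F p.2) ≠ 0)]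
    simp only [filter_filter, ne_eq, not_not]
  have hKcard : Kdual.ncard = Fintype.card F ^ 3 := by
    rw [hrange, ← Set.image_univ, Set.ncard_image_of_injective _ hinj, Set.ncard_univ,
      Nat.card_eq_fintype_card, hprod]
  have hcube : 2 * Fintype.card F ^ 2 ≤ Fintype.card F ^ 3 := by
    rw [pow_succ' _ 2]
    exact Nat.mul_le_mul_right _ hq1
  have hmul : Fintype.card F * (Fintype.card F ^ 2 - 1) = Fintype.card F ^ 3 - Fintype.card F := by
    rw [Nat.mul_sub, mul_one, ← pow_succ']
  rw [hKcard, hcount 0 (fun p => p = 0) (weight_eq_zero_iff hcK),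
    hcount _ (fun p => p.1 ≠ 0 ∧ Algebra.trace (ZMod 2) F (p.1⁻¹ * Algebra.norm F p.2) ≠ 0) ?low,
    hcount _ (fun p => p.1 = 0 ∧ p.2 ≠ 0) ?mid,
    hcount _ (fun p => p.1 ≠ 0 ∧ Algebra.trace (ZMod 2) F (p.1⁻¹ * Algebra.norm F p.2) = 0) ?high,
    hmid]
  · rw [hmul] at hlow ⊢
    refine ⟨by simp [filter_eq'], ?_, rfl, ?_, ?_⟩ <;> omega
  all_goals
    intro p
    rcases htri p with ⟨h, hw⟩ | ⟨h, hw⟩ | ⟨h, hw⟩ | ⟨h, hw⟩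
    all_goals first
      | exact iff_of_true (by omega) h
      | exact iff_of_false (by omega) (by simp [h])
end

section
/- Let m ≥ 1 and q = 2^m. Every zero-fixing automorphism of the MDS code M_q^⊥ ⊆ F_q^{q+1} is semilinear: if π is a permutation of {1,…,q+1} and σ_1,…,σ_{q+1} are permutations of F_q fixing 0 such that the map (v_1,…,v_{q+1}) ↦ (σ_1(v_{π^{-1}(1)}),…,σ_{q+1}(v_{π^{-1}(q+1)})) maps M_q^⊥ onto M_q^⊥, then there exist a field automorphism τ of F_q and nonzero constants c_1,…,c_{q+1} ∈ F_q with σ_j(a) = c_j·τ(a) for all j and all a ∈ F_q. Equivalently, Aut0(M_q^⊥) = AutL_2(M_q^⊥) = AutS(M_q^⊥). -/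
open Finset

/-- Zero-fixing automorphisms of a code. -/
def aut0Set {F : Type*} [Zero F] {ι : Type*} (C : Set (ι → F)) :
    Set (Equiv.Perm (ι → F)) :=
  {e | (∃ (π : Equiv.Perm ι) (σ : ι → Equiv.Perm F), (∀ i, σ i 0 = 0) ∧
        ∀ v i, e v i = σ i (v (π⁻¹ i))) ∧ ⇑e '' C = C}

/-- `F₂`-linear automorphisms of a code over a field of characteristic 2: the alphabet
permutations in every coordinate are additive (equivalently, `F₂`-linear). -/
def autL2Set {F : Type*} [Field F] {ι : Type*} (C : Set (ι → F)) :
    Set (Equiv.Perm (ι → F)) :=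
  {e | (∃ (π : Equiv.Perm ι) (σ : ι → Equiv.Perm F),
        (∀ i x y, σ i (x + y) = σ i x + σ i y) ∧
        ∀ v i, e v i = σ i (v (π⁻¹ i))) ∧ ⇑e '' C = C}

/-- Semilinear automorphisms of a code over a field `F`. -/
def autSSet {F : Type*} [Field F] {ι : Type*} (C : Set (ι → F)) :
    Set (Equiv.Perm (ι → F)) :=
  {e | (∃ (π : Equiv.Perm ι) (τ : F ≃+* F) (c : ι → F), (∀ i, c i ≠ 0) ∧
        ∀ v i, e v i = c i * τ (v (π⁻¹ i))) ∧ ⇑e '' C = C}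

/-- A linear code in which a word with three zeros vanishes (minimum distance at least
`|ι| - 2`). -/
def DeterminedByTriples {F ι : Type*} [Field F] (V : Submodule F (ι → F)) : Prop :=
  ∀ v ∈ V, ∀ i j k, i ≠ j → i ≠ k → j ≠ k → v i = 0 → v j = 0 → v k = 0 → v = 0

/-- A linear code whose words take arbitrary prescribed values on any three coordinates. -/
def InterpolatesTriples {F ι : Type*} [Field F] (V : Submodule F (ι → F)) : Prop :=
  ∀ i j k, i ≠ j → i ≠ k → j ≠ k → ∀ a b c, ∃ v ∈ V, v i = a ∧ v j = b ∧ v k = c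

section CoordinatewiseMaps

variable {F ι : Type*} [Field F] {V W : Submodule F (ι → F)} {ρ : ι → F → F}

theorem map_mul_eq_of_two_zeros (hW : DeterminedByTriples W) (hρ0 : ∀ i, ρ i 0 = 0)
    (hmap : ∀ v ∈ V, (fun i => ρ i (v i)) ∈ W) {w : ι → F} (hw : w ∈ V) {i j k l : ι}
    (hkl : k ≠ l) (hki : k ≠ i) (hli : l ≠ i) (hk : w k = 0) (hl : w l = 0) (t : F) :
    ρ j (t * w j) * ρ i (w i) = ρ i (t * w i) * ρ j (w j) := by
  have h := hW _ (W.sub_mem (W.smul_mem (ρ i (w i)) (hmap _ (V.smul_mem t hw)))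
    (W.smul_mem (ρ i (t * w i)) (hmap _ hw))) k l i hkl hki hli
    (by simp [hk, hρ0]) (by simp [hl, hρ0]) (by simp [mul_comm])
  have := congrFun h j
  simp only [Pi.sub_apply, Pi.smul_apply, smul_eq_mul, Pi.zero_apply] at this
  linear_combination this

theorem map_add_of_four (hW : DeterminedByTriples W) (hV : InterpolatesTriples V)
    (hρ0 : ∀ i, ρ i 0 = 0) (hmap : ∀ v ∈ V, (fun i => ρ i (v i)) ∈ W) {i j k l : ι}
    (hij : i ≠ j) (hik : i ≠ k) (hil : i ≠ l) (hjk : j ≠ k) (hjl : j ≠ l) (hkl : k ≠ l)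
    (x y : F) : ρ i (x + y) = ρ i x + ρ i y := by
  obtain ⟨u, hu, hui, huj, hul⟩ := hV i j l hij hil hjl x 0 0
  obtain ⟨v, hv, hvi, hvk, hvl⟩ := hV i k l hik hil hkl y 0 0
  have h := hW _ (W.sub_mem (hmap _ (V.add_mem hu hv)) (W.add_mem (hmap _ hu) (hmap _ hv)))
    j k l hjk hjl hkl (by simp [huj, hρ0]) (by simp [hvk, hρ0]) (by simp [hul, hvl, hρ0])
  have := congrFun h i
  simp only [Pi.sub_apply, Pi.add_apply, Pi.zero_apply, hui, hvi] at this
  exact sub_eq_zero.mp this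

theorem ne_zero_of_two_zeros (hV : DeterminedByTriples V) {w : ι → F} (hw : w ∈ V)
    {i j k l : ι} (hij : i ≠ j) (hik : i ≠ k) (hjk : j ≠ k)
    (hi : w i = 0) (hj : w j = 0) (hl : w l ≠ 0) : w k ≠ 0 := by
  intro hk
  exact hl (by rw [hV w hw i j k hij hik hjk hi hj hk]; rfl)

theorem map_eq_mul_map_of_two_zeros (hV : DeterminedByTriples V) (hW : DeterminedByTriples W)
    (hρ0 : ∀ i, ρ i 0 = 0) (hρ : ∀ i, Function.Injective (ρ i))
    (hmap : ∀ v ∈ V, (fun i => ρ i (v i)) ∈ W) {w : ι → F} (hw : w ∈ V) {i j k l : ι}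
    (hkl : k ≠ l) (hki : k ≠ i) (hli : l ≠ i)
    (hk : w k = 0) (hl : w l = 0) (hj : w j = 1) :
    ∃ c ≠ 0, ∀ s, ρ j s = c * ρ i (s * w i) := by
  have hne : ∀ i {a : F}, a ≠ 0 → ρ i a ≠ 0 := fun i a ha h =>
    ha (hρ i (h.trans (hρ0 i).symm))
  have hi : ρ i (w i) ≠ 0 :=
    hne i (ne_zero_of_two_zeros (l := j) hV hw hkl hki hli hk hl (by simp [hj]))
  refine ⟨ρ j 1 / ρ i (w i), div_ne_zero (hne j one_ne_zero) hi, fun s => ?_⟩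
  have := map_mul_eq_of_two_zeros (j := j) hW hρ0 hmap hw hkl hki hli hk hl s
  rw [hj, mul_one] at this
  field_simp
  linear_combination this

theorem exists_map_mul_eq [Fintype F] [Fintype ι] (hcard : Fintype.card ι = Fintype.card F + 1)
    (hq : 4 ≤ Fintype.card F)
    (hV : DeterminedByTriples V) (hVi : InterpolatesTriples V) (hW : DeterminedByTriples W)
    (hρ0 : ∀ i, ρ i 0 = 0) (hρ : ∀ i, Function.Injective (ρ i))
    (hmap : ∀ v ∈ V, (fun i => ρ i (v i)) ∈ W) {i j k : ι}
    (hij : i ≠ j) (hik : i ≠ k) (hjk : j ≠ k) {x : F} (hx : x ≠ 0) :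
    ∃ c, ∀ s, ρ i (s * x) = c * ρ i s := by
  classical
  let P : Finset ι := univ \ {i, j, k}
  have hP : ∀ p, p ∈ P ↔ p ≠ i ∧ p ≠ j ∧ p ≠ k := by simp [P]
  have hPcard : P.card = Fintype.card F - 2 := by
    rw [card_sdiff_of_subset (subset_univ _), card_univ, hcard,
      card_eq_three.mpr ⟨i, j, k, hij, hik, hjk, rfl⟩]
    omega
  have hword : ∀ p, ∃ w, p ∈ P → w ∈ V ∧ w k = 0 ∧ w p = 0 ∧ w j = 1 := by
    intro p
    by_cases hp : p ∈ P
    · obtain ⟨-, hpj, hpk⟩ := (hP p).1 hp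
      obtain ⟨w, hw⟩ := hVi k p j hpk.symm hjk.symm hpj 0 0 1
      exact ⟨w, fun _ => hw⟩
    · exact ⟨0, fun h => absurd h hp⟩
  choose w hw using hword
  have hinj : Set.InjOn (fun p => w p i) P := by
    intro p hp p' hp' h
    by_contra hne
    obtain ⟨hpV, hpk, hpp, hpj⟩ := hw p hp
    obtain ⟨hpV', hpk', hpp', hpj'⟩ := hw p' hp'
    obtain ⟨-, hp₂, hp₃⟩ := (hP p).1 hp
    obtain ⟨-, hp₂', hp₃'⟩ := (hP p').1 hp'
    have heq := hV _ (V.sub_mem hpV hpV') i j k hij hik hjk (by simpa [sub_eq_zero] using h)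
      (by simp [hpj, hpj']) (by simp [hpk, hpk'])
    have hz : w p p' = 0 := by
      have := congrFun heq p'
      simpa [hpp'] using this
    exact ne_zero_of_two_zeros (l := j) hV hpV hp₃.symm hp₃'.symm hne hpk hpp
      (by simp [hpj]) hz
  let T : Finset F := P.image fun p => w p i
  have hTcard : T.card = Fintype.card F - 2 := by rw [card_image_of_injOn hinj, hPcard]
  have hT0 : ∀ t ∈ T, t ≠ 0 := by
    intro t ht
    obtain ⟨p, hp, rfl⟩ := mem_image.1 ht
    obtain ⟨hpV, hpk, hpp, hpj⟩ := hw p hp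
    obtain ⟨hpi, -, hpk'⟩ := (hP p).1 hp
    exact ne_zero_of_two_zeros (l := j) hV hpV hpk'.symm hik.symm hpi hpk hpp (by simp [hpj])
  have hTρ : ∀ t ∈ T, ∃ c ≠ 0, ∀ s, ρ j s = c * ρ i (s * t) := by
    intro t ht
    obtain ⟨p, hp, rfl⟩ := mem_image.1 ht
    obtain ⟨hpV, hpk, hpp, hpj⟩ := hw p hp
    obtain ⟨hpi, -, hpk'⟩ := (hP p).1 hp
    exact map_eq_mul_map_of_two_zeros hV hW hρ0 hρ hmap hpV hpk'.symm hik.symm hpi hpk hpp hpj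
  have hmeet : ¬ Disjoint T (T.image (x * ·)) := by
    intro hd
    have hsub : T ∪ T.image (x * ·) ⊆ univ.erase 0 := by
      intro t ht
      rcases mem_union.1 ht with ht | ht
      · simpa using hT0 t ht
      · obtain ⟨t', ht', rfl⟩ := mem_image.1 ht
        simpa using ⟨hx, hT0 t' ht'⟩
    have := card_le_card hsub
    rw [card_union_of_disjoint hd, card_image_of_injective _ (mul_right_injective₀ hx), hTcard,
      card_erase_of_mem (mem_univ _), card_univ] at this
    omega
  obtain ⟨t, ht, ht'⟩ := not_disjoint_iff.1 hmeet
  obtain ⟨u, hu, rfl⟩ := mem_image.1 ht'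
  have hu0 := hT0 u hu
  obtain ⟨c, hc, hct⟩ := hTρ _ ht
  obtain ⟨d, -, hdu⟩ := hTρ _ hu
  refine ⟨d / c, fun s => ?_⟩
  have h₁ := hct (s / u)
  have h₂ := hdu (s / u)
  rw [show s / u * (x * u) = s * x by field_simp] at h₁
  rw [div_mul_cancel₀ _ hu0] at h₂
  field_simp
  rw [mul_comm, ← h₁, h₂]

theorem exists_ringEquiv_of_map_mul_eq [Finite F] {f : F → F} (hf : Function.Injective f)
    (hadd : ∀ x y, f (x + y) = f x + f y) (hmul : ∀ x, ∃ c, ∀ s, f (s * x) = c * f s) :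
    ∃ τ : F ≃+* F, ∀ a, f a = f 1 * τ a := by
  have h0 : f 0 = 0 := by simpa using hadd 0 0
  have h1 : f 1 ≠ 0 := fun h => one_ne_zero (hf (h.trans h0.symm))
  let φ : F →+* F :=
    { toFun := fun a => f a / f 1
      map_one' := div_self h1
      map_zero' := by simp [h0]
      map_add' := fun x y => by rw [hadd, add_div]
      map_mul' := fun x y => by
        obtain ⟨c, hc⟩ := hmul y
        have hy := hc 1
        rw [one_mul] at hy
        rw [hc x, hy]
        field_simp }
  refine ⟨RingEquiv.ofBijective φ (Finite.injective_iff_bijective.1 φ.injective), fun a => ?_⟩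
  change f a = f 1 * (f a / f 1)
  field_simp

/-- Zero-fixing coordinatewise maps between three-dimensional MDS codes of length `q + 1`
over `F_q`, `q ≥ 4`, are semilinear. -/
theorem semilinear_of_coordinatewise [Fintype F] [Fintype ι]
    (hcard : Fintype.card ι = Fintype.card F + 1) (hq : 4 ≤ Fintype.card F)
    (hV : DeterminedByTriples V) (hVi : InterpolatesTriples V) (hW : DeterminedByTriples W)
    (hρ0 : ∀ i, ρ i 0 = 0) (hρ : ∀ i, Function.Injective (ρ i))
    (hmap : ∀ v ∈ V, (fun i => ρ i (v i)) ∈ W) :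
    ∃ (τ : F ≃+* F) (c : ι → F), (∀ j, c j ≠ 0) ∧ ∀ j a, ρ j a = c j * τ a := by
  classical
  have hex : ∀ s : Finset ι, s.card ≤ 3 → ∃ x, x ∉ s := fun s hs => by
    by_contra! h
    have := card_le_card (fun x _ => h x : univ ⊆ s)
    rw [card_univ] at this
    omega
  obtain ⟨i, -⟩ := hex ∅ (by simp)
  have hmul : ∀ x, ∃ c, ∀ s, ρ i (s * x) = c * ρ i s := by
    intro x
    rcases eq_or_ne x 0 with rfl | hx
    · exact ⟨0, by simp [hρ0]⟩
    · obtain ⟨j, hj⟩ := hex {i} (by simp)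
      obtain ⟨k, hk⟩ := hex {i, j} (card_le_two.trans (by norm_num))
      simp only [mem_insert, mem_singleton, not_or] at hj hk
      exact exists_map_mul_eq hcard hq hV hVi hW hρ0 hρ hmap (Ne.symm hj) (Ne.symm hk.1)
        (Ne.symm hk.2) hx
  have hadd : ∀ x y, ρ i (x + y) = ρ i x + ρ i y := by
    obtain ⟨j, hj⟩ := hex {i} (by simp)
    obtain ⟨k, hk⟩ := hex {i, j} (card_le_two.trans (by norm_num))
    obtain ⟨l, hl⟩ := hex {i, j, k} card_le_three
    simp only [mem_insert, mem_singleton, not_or] at hj hk hl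
    exact map_add_of_four hW hVi hρ0 hmap (Ne.symm hj) (Ne.symm hk.1) (Ne.symm hl.1)
      (Ne.symm hk.2) (Ne.symm hl.2.1) (Ne.symm hl.2.2)
  obtain ⟨τ, hτ⟩ := exists_ringEquiv_of_map_mul_eq (hρ i) hadd hmul
  refine ⟨τ, fun j => ρ j 1, fun j h => one_ne_zero (hρ j (h.trans (hρ0 j).symm)),
    fun j a => ?_⟩
  rcases eq_or_ne i j with rfl | hij
  · exact hτ a
  obtain ⟨k, hk⟩ := hex {i, j} (card_le_two.trans (by norm_num))
  obtain ⟨l, hl⟩ := hex {i, j, k} card_le_three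
  simp only [mem_insert, mem_singleton, not_or] at hk hl
  obtain ⟨w, hw, hwk, hwl, hwj⟩ := hVi k l j (Ne.symm hl.2.2) hk.2 hl.2.1 0 0 1
  obtain ⟨c, -, hc⟩ := map_eq_mul_map_of_two_zeros (i := i) hV hW hρ0 hρ hmap hw
    (Ne.symm hl.2.2) hk.1 hl.1 hwk hwl hwj
  simp only [hc, one_mul]
  rw [hτ (a * w i), hτ (w i), map_mul]
  ring

end CoordinatewiseMaps

section TraceCode

variable {F K : Type*} [Field F] [Field K] [Algebra F K] {n : ℕ}

/-- The code of words `(c + Tr(δ ζ ^ (j + 1)))_j`. -/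
noncomputable def traceCodeMap (F : Type*) {K : Type*} [Field F] [Field K] [Algebra F K] (n : ℕ)
    (ζ : K) : F × K →ₗ[F] (Fin n → F) :=
  LinearMap.pi fun j => LinearMap.fst F F K +
    (Algebra.trace F K ∘ₗ LinearMap.mulRight F (ζ ^ ((j : ℕ) + 1))) ∘ₗ LinearMap.snd F F K

theorem traceCodeMap_apply (ζ : K) (x : F × K) (j : Fin n) :
    traceCodeMap F n ζ x j = x.1 + Algebra.trace F K (x.2 * ζ ^ ((j : ℕ) + 1)) := by
  simp [traceCodeMap]

theorem quadratic_coeffs_eq_zero {a b c x y z : K} (hxy : x ≠ y) (hxz : x ≠ z) (hyz : y ≠ z)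
    (hx : a * x ^ 2 + b * x + c = 0) (hy : a * y ^ 2 + b * y + c = 0)
    (hz : a * z ^ 2 + b * z + c = 0) : a = 0 ∧ b = 0 := by
  have h₁ : a * (x + y) + b = 0 :=
    (mul_eq_zero.1 (by linear_combination hx - hy :
      (x - y) * (a * (x + y) + b) = 0)).resolve_left (sub_ne_zero.2 hxy)
  have h₂ : a * (x + z) + b = 0 :=
    (mul_eq_zero.1 (by linear_combination hx - hz :
      (x - z) * (a * (x + z) + b) = 0)).resolve_left (sub_ne_zero.2 hxz)
  have ha : a = 0 :=
    (mul_eq_zero.1 (by linear_combination h₁ - h₂ : (y - z) * a = 0)).resolve_left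
      (sub_ne_zero.2 hyz)
  exact ⟨ha, by simpa [ha] using h₁⟩

variable [Fintype F] [Fintype K]

theorem algebraMap_trace_quadratic (hcK : Fintype.card K = Fintype.card F ^ 2) (x : K) :
    algebraMap F K (Algebra.trace F K x) = x + x ^ Fintype.card F := by
  have hfin : Module.finrank F K = 2 := by
    have := Module.card_eq_pow_finrank (K := F) (V := K)
    rw [hcK] at this
    exact (Nat.pow_right_injective (Fintype.one_lt_card (α := F)) this).symm
  rw [FiniteField.algebraMap_trace_eq_sum_pow, hfin]
  simp [sum_range_succ]

theorem traceCodeMap_eq_zero (hcK : Fintype.card K = Fintype.card F ^ 2) {ζ : K}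
    (hζ : orderOf ζ = Fintype.card F + 1) {x : F × K} {i j k : Fin (Fintype.card F + 1)}
    (hij : i ≠ j) (hik : i ≠ k) (hjk : j ≠ k)
    (hi : traceCodeMap F (Fintype.card F + 1) ζ x i = 0)
    (hj : traceCodeMap F (Fintype.card F + 1) ζ x j = 0)
    (hk : traceCodeMap F (Fintype.card F + 1) ζ x k = 0) : x = 0 := by
  have hinj : ∀ {i j : Fin (Fintype.card F + 1)}, i ≠ j →
      ζ ^ ((i : ℕ) + 1) ≠ ζ ^ ((j : ℕ) + 1) := by
    intro i j hne h
    have hζ0 : ζ ≠ 0 := by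
      rintro rfl
      simp at hζ
    rw [pow_succ, pow_succ] at h
    exact hne (Fin.ext (pow_injOn_Iio_orderOf (by simp [hζ, i.2]) (by simp [hζ, j.2])
      (mul_right_cancel₀ hζ0 h)))
  have heq : ∀ i : Fin (Fintype.card F + 1), traceCodeMap F (Fintype.card F + 1) ζ x i = 0 →
      x.2 * (ζ ^ ((i : ℕ) + 1)) ^ 2 + algebraMap F K x.1 * ζ ^ ((i : ℕ) + 1) +
        x.2 ^ Fintype.card F = 0 := by
    intro i hi
    have h := congrArg (algebraMap F K) hi
    rw [traceCodeMap_apply, map_add, algebraMap_trace_quadratic hcK, map_zero, mul_pow] at h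
    have hone : (ζ ^ ((i : ℕ) + 1)) ^ Fintype.card F * ζ ^ ((i : ℕ) + 1) = 1 := by
      rw [← pow_succ, ← pow_mul, mul_comm, pow_mul,
        orderOf_dvd_iff_pow_eq_one.1 hζ.dvd, one_pow]
    linear_combination ζ ^ ((i : ℕ) + 1) * h - x.2 ^ Fintype.card F * hone
  obtain ⟨h₂, h₁⟩ := quadratic_coeffs_eq_zero (hinj hij) (hinj hik) (hinj hjk)
    (heq i hi) (heq j hj) (heq k hk)
  exact Prod.ext ((map_eq_zero _).1 h₁) h₂

theorem determinedByTriples_traceCode (hcK : Fintype.card K = Fintype.card F ^ 2) {ζ : K}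
    (hζ : orderOf ζ = Fintype.card F + 1) :
    DeterminedByTriples (LinearMap.range (traceCodeMap F (Fintype.card F + 1) ζ)) := by
  rintro _ ⟨x, rfl⟩ i j k hij hik hjk hi hj hk
  rw [traceCodeMap_eq_zero hcK hζ hij hik hjk hi hj hk, map_zero]

theorem interpolatesTriples_traceCode (hcK : Fintype.card K = Fintype.card F ^ 2) {ζ : K}
    (hζ : orderOf ζ = Fintype.card F + 1) :
    InterpolatesTriples (LinearMap.range (traceCodeMap F (Fintype.card F + 1) ζ)) := by
  intro i j k hij hik hjk a b c
  let w := traceCodeMap F (Fintype.card F + 1) ζ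
  let f : F × K →ₗ[F] F × F × F :=
    (LinearMap.proj i ∘ₗ w).prod ((LinearMap.proj j ∘ₗ w).prod (LinearMap.proj k ∘ₗ w))
  have hf : Function.Injective f := by
    rw [injective_iff_map_eq_zero]
    intro x hx
    have h : w x i = 0 ∧ w x j = 0 ∧ w x k = 0 := by simpa [f] using hx
    exact traceCodeMap_eq_zero hcK hζ hij hik hjk h.1 h.2.1 h.2.2
  have hfs : Function.Surjective f :=
    ((Fintype.bijective_iff_injective_and_card f).2 ⟨hf, by simp [hcK, sq]⟩).2
  obtain ⟨x, hx⟩ := hfs (a, b, c)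
  have h : w x i = a ∧ w x j = b ∧ w x k = c := by simpa [f] using hx
  exact ⟨w x, ⟨x, rfl⟩, h⟩

end TraceCode

theorem autSSet_subset_autL2Set {F ι : Type*} [Field F] (C : Set (ι → F)) :
    autSSet C ⊆ autL2Set C := by
  rintro e ⟨⟨π, τ, c, hc, he⟩, hC⟩
  exact ⟨⟨π, fun i => τ.toEquiv.trans (Equiv.mulLeft₀ (c i) (hc i)),
    fun i x y => by simp [mul_add], fun v i => by simp [he]⟩, hC⟩

theorem autL2Set_subset_aut0Set {F ι : Type*} [Field F] (C : Set (ι → F)) :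
    autL2Set C ⊆ aut0Set C := by
  rintro e ⟨⟨π, σ, hσ, he⟩, hC⟩
  exact ⟨⟨π, σ, fun i => by simpa using hσ i 0 0, he⟩, hC⟩

theorem perm_eq_one_of_card_eq_two {F : Type*} [Zero F] [Fintype F] (hF : Fintype.card F = 2)
    (s : Equiv.Perm F) (hs : s 0 = 0) (a : F) : s a = a := by
  classical
  rcases eq_or_ne a 0 with rfl | ha
  · exact hs
  have hsa : s a ≠ 0 := fun h => ha (s.injective (h.trans hs.symm))
  by_contra hne
  have := card_le_univ {s a, a, (0 : F)}
  rw [card_eq_three.mpr ⟨s a, a, 0, hne, hsa, ha, rfl⟩, hF] at this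
  omega

/-- Let `m ≥ 1`, `q = 2^m`.  Every zero-fixing automorphism of the MDS code
`M_q^⊥ ⊆ F_q^{q+1}` is semilinear: if a coordinate permutation `π` together with
zero-fixing alphabet permutations `σ_j` maps `M_q^⊥` onto itself, then there are a field
automorphism `τ` of `F_q` and nonzero constants `c_j` with `σ_j(a) = c_j·τ(a)` for all `j`
and `a`.  Equivalently, `Aut0(M_q^⊥) = AutL_2(M_q^⊥) = AutS(M_q^⊥)`. -/
theorem stmt_10 (m q : ℕ) (hm : 1 ≤ m) (hq : q = 2 ^ m)
    (F K : Type) [Field F] [Field K] [Fintype F] [Fintype K] [Algebra F K]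
    (hcF : Fintype.card F = q) (hcK : Fintype.card K = q ^ 2)
    (α : K) (hα : orderOf α = q ^ 2 - 1)
    (ζ : K) (hζ : ζ = α ^ (q - 1))
    (Mdual : Set (Fin (q + 1) → F))
    (hM : Mdual = {w | ∃ (c : F) (δ : K), ∀ j : Fin (q + 1),
        w j = c + Algebra.trace F K (δ * ζ ^ ((j : ℕ) + 1))}) :
    (∀ (π : Equiv.Perm (Fin (q + 1))) (σ : Fin (q + 1) → Equiv.Perm F),
      (∀ j, σ j 0 = 0) →
      (fun v : Fin (q + 1) → F => fun j => σ j (v (π⁻¹ j))) '' Mdual = Mdual →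
      ∃ (τ : F ≃+* F) (c : Fin (q + 1) → F), (∀ j, c j ≠ 0) ∧
        ∀ (j : Fin (q + 1)) (a : F), σ j a = c j * τ a) ∧
    aut0Set Mdual = autL2Set Mdual ∧ autL2Set Mdual = autSSet Mdual := by
  subst hcF
  have hqpos : 1 < Fintype.card F := Fintype.one_lt_card
  have hζo : orderOf ζ = Fintype.card F + 1 := by
    have hfac : Fintype.card F ^ 2 - 1 = (Fintype.card F + 1) * (Fintype.card F - 1) := by
      simpa using Nat.sq_sub_sq (Fintype.card F) 1
    have hpos : 0 < Fintype.card F - 1 := by omega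
    rw [hζ, orderOf_pow_of_dvd hpos.ne' (by rw [hα, hfac]; exact dvd_mul_left _ _), hα, hfac,
      Nat.mul_div_cancel _ hpos]
  have hMV : Mdual = (LinearMap.range (traceCodeMap F (Fintype.card F + 1) ζ) :
      Set (Fin (Fintype.card F + 1) → F)) := by
    ext w
    simp only [hM, Set.mem_ofPred_eq, SetLike.mem_coe, LinearMap.mem_range, Prod.exists]
    refine exists_congr fun c => exists_congr fun δ => ?_
    rw [funext_iff]
    exact forall_congr' fun j => by rw [traceCodeMap_apply, eq_comm]
  have hmain : ∀ (π : Equiv.Perm (Fin (Fintype.card F + 1)))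
      (σ : Fin (Fintype.card F + 1) → Equiv.Perm F), (∀ j, σ j 0 = 0) →
      (fun v : Fin (Fintype.card F + 1) → F => fun j => σ j (v (π⁻¹ j))) '' Mdual = Mdual →
      ∃ (τ : F ≃+* F) (c : Fin (Fintype.card F + 1) → F), (∀ j, c j ≠ 0) ∧
        ∀ (j : Fin (Fintype.card F + 1)) (a : F), σ j a = c j * τ a := by
    intro π σ hσ himg
    rcases hm.eq_or_lt with rfl | hm2
    · exact ⟨RingEquiv.refl F, 1, by simp, fun j a => by
        simp [perm_eq_one_of_card_eq_two (by simpa using hq) (σ j) (hσ j) a]⟩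
    have hq4 : 4 ≤ Fintype.card F := by
      rw [hq]
      exact Nat.pow_le_pow_right (n := 2) (by norm_num) hm2
    have hdet := determinedByTriples_traceCode hcK hζo
    set V := LinearMap.range (traceCodeMap F (Fintype.card F + 1) ζ)
    have hW : DeterminedByTriples (V.comap (LinearMap.funLeft F F ⇑π⁻¹)) := by
      intro v hv i j k hij hik hjk hi hj hk
      have h := hdet _ hv (π i) (π j) (π k) (π.injective.ne hij) (π.injective.ne hik)
        (π.injective.ne hjk) (by simpa [LinearMap.funLeft_apply] using hi)
        (by simpa [LinearMap.funLeft_apply] using hj)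
        (by simpa [LinearMap.funLeft_apply] using hk)
      ext l
      simpa [LinearMap.funLeft_apply] using congrFun h (π l)
    obtain ⟨τ, c, hc, hτ⟩ := semilinear_of_coordinatewise (ρ := fun i => σ (π i)) (by simp) hq4
      hdet (interpolatesTriples_traceCode hcK hζo) hW (fun i => hσ _)
      (fun i => (σ (π i)).injective) (by
        intro v hv
        have : (fun j => σ j (v (π⁻¹ j))) ∈ Mdual := himg ▸ ⟨v, by rw [hMV]; exact hv, rfl⟩
        rw [hMV] at this
        rw [Submodule.mem_comap]
        convert SetLike.mem_coe.1 this using 1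
        ext j
        simp [LinearMap.funLeft_apply])
    exact ⟨τ, fun j => c (π⁻¹ j), fun j => hc _, fun j a => by simpa using hτ (π⁻¹ j) a⟩
  have h0S : aut0Set Mdual ⊆ autSSet Mdual := by
    rintro e ⟨⟨π, σ, hσ, he⟩, hC⟩
    have hfun : (fun v : Fin (Fintype.card F + 1) → F => fun j => σ j (v (π⁻¹ j))) = ⇑e := by
      ext v j
      exact (he v j).symm
    obtain ⟨τ, c, hc, hτ⟩ := hmain π σ hσ (by rw [hfun, hC])
    exact ⟨⟨π, τ, c, hc, fun v i => by rw [he, hτ]⟩, hC⟩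
  exact ⟨hmain,
    (h0S.trans (autSSet_subset_autL2Set _)).antisymm (autL2Set_subset_aut0Set _),
    ((autL2Set_subset_aut0Set _).trans h0S).antisymm (autSSet_subset_autL2Set _)⟩
end

section
/- Let m ≥ 1 and q = 2^m. For any a, a′, b, b′ ∈ F_q with ab′ + a′b ≠ 0 and any t = 2^s with 0 ≤ s ≤ m−1, define Ψ : F_{q²} → F_{q²} by Ψ(γ_0 + γ_1α) = ((aγ_0 + a′γ_1) + (bγ_0 + b′γ_1)α)^t for γ_0, γ_1 ∈ F_q. Since every nonzero element of F_{q²} is uniquely d·ζ^i with d ∈ F_q^× and i ∈ {1,…,q+1}, write Ψ(ζ^j) = d_j ζ^{i_j}. Then j ↦ i_j is a permutation of {1,…,q+1}, and the map ψ : F_q^{q+1} → F_q^{q+1} sending z = (z_1,…,z_{q+1}) to the word whose i_j-th coordinate equals d_j·z_j^t for each j is a semilinear automorphism of M_q, i.e., ψ(M_q) = M_q. Distinct tuples (a, a′, b, b′, t) yield distinct maps ψ; consequently the semilinear automorphism group AutS(M_q) contains a subgroup of order m·(q²−1)·(q²−q) = |ΓL(2,q)|. -/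
open Finset

/-- The dual of a code (as a set of words) with respect to the standard inner product. -/
def dualSet {F : Type*} [CommRing F] {ι : Type*} [Fintype ι] (C : Set (ι → F)) :
    Set (ι → F) :=
  {y | ∀ x ∈ C, ∑ i, x i * y i = 0}

/-- Every nonzero vector is, in a unique way, a scalar multiple of exactly one of the `P j`. -/
structure IsProjTransversal (F : Type*) {K ι : Type*} [Field F] [Field K] [Algebra F K]
    (P : ι → K) : Prop where
  exists_smul : ∀ x : K, x ≠ 0 → ∃ (c : F) (j : ι), x = c • P j
  smul_inj : ∀ (c c' : F) (j j' : ι), c ≠ 0 → c • P j = c' • P j' → c = c' ∧ j = j'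

/-- `e` is the monomial map on words which the semilinear map `Ψ` (with companion `τ`) induces
through its action on the points `P j`. -/
structure Induces {F K ι : Type*} [Field F] [Field K] [Algebra F K] (P : ι → K) (τ : F ≃+* F)
    (Ψ : K ≃+ K) (d : ι → F) (I : ι → ι) (e : (ι → F) → (ι → F)) : Prop where
  semilinear : ∀ (c : F) (x : K), Ψ (c • x) = τ c • Ψ x
  ne_zero : ∀ j, d j ≠ 0
  map_point : ∀ j, Ψ (P j) = d j • P (I j)
  apply_index : ∀ z j, e z (I j) = d j * τ (z j)

section Transversal

variable {F K ι : Type*} [Field F] [Field K] [Algebra F K] {P : ι → K}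

theorem IsProjTransversal.point_ne_zero (hP : IsProjTransversal F P) (j : ι) : P j ≠ 0 := by
  intro h
  have := (hP.smul_inj 1 0 j j one_ne_zero (by simp [h])).1
  exact one_ne_zero this

theorem IsProjTransversal.index_bijective [Finite ι] (hP : IsProjTransversal F P) {τ : F ≃+* F}
    {Ψ : K ≃+ K} {d : ι → F} {I : ι → ι} (hΨ : ∀ (c : F) (x : K), Ψ (c • x) = τ c • Ψ x)
    (hd : ∀ j, d j ≠ 0) (hdI : ∀ j, Ψ (P j) = d j • P (I j)) : Function.Bijective I := by
  rw [← Finite.injective_iff_bijective]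
  intro j k hjk
  have h1 : Ψ ((τ.symm (d k)) • P j) = Ψ ((τ.symm (d j)) • P k) := by
    rw [hΨ, hΨ, hdI, hdI, hjk]
    simp only [RingEquiv.apply_symm_apply, smul_smul, mul_comm]
  exact (hP.smul_inj _ _ _ _ (by simpa using hd k) (Ψ.injective h1)).2

theorem Induces.bijective [Finite ι] (hP : IsProjTransversal F P) {τ : F ≃+* F} {Ψ : K ≃+ K}
    {d : ι → F} {I : ι → ι} {e : (ι → F) → (ι → F)} (h : Induces P τ Ψ d I e) :
    Function.Bijective I :=
  hP.index_bijective h.semilinear h.ne_zero h.map_point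

theorem Induces.injective {τ : F ≃+* F} {Ψ : K ≃+ K}
    {d : ι → F} {I : ι → ι} {e : (ι → F) → (ι → F)} (h : Induces P τ Ψ d I e) :
    Function.Injective e := by
  intro z w hzw
  funext j
  have := congrFun hzw (I j)
  rw [h.apply_index, h.apply_index] at this
  exact τ.injective (mul_left_cancel₀ (h.ne_zero j) this)

theorem Induces.unique [Finite ι] (hP : IsProjTransversal F P) {τ τ' : F ≃+* F} {Ψ Ψ' : K ≃+ K}
    {d d' : ι → F} {I I' : ι → ι} {e : (ι → F) → (ι → F)}
    (h : Induces P τ Ψ d I e) (h' : Induces P τ' Ψ' d' I' e) : τ = τ' ∧ Ψ = Ψ' := by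
  classical
  have hI : I = I' := by
    funext j
    obtain ⟨k, hk⟩ := (h'.bijective hP).2 (I j)
    have h1 := h.apply_index (Pi.single j 1) j
    rw [← hk, h'.apply_index] at h1
    by_cases hkj : k = j
    · rw [← hk, hkj]
    · exfalso
      simp [hkj] at h1
      exact h.ne_zero j h1.symm
  subst hI
  have hd : d = d' := by
    funext j
    have h1 := h.apply_index (fun _ => 1) j
    rw [h'.apply_index] at h1
    simpa using h1.symm
  subst hd
  have hPΨ : ∀ j, Ψ (P j) = Ψ' (P j) := fun j => by rw [h.map_point, h'.map_point]
  have hτ : τ = τ' := by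
    ext c
    obtain ⟨j, -⟩ := (hP.exists_smul 1 one_ne_zero).choose_spec
    have h1 := h.apply_index (fun _ => c) j
    rw [h'.apply_index] at h1
    exact (mul_left_cancel₀ (h.ne_zero j) h1).symm
  subst hτ
  refine ⟨rfl, ?_⟩
  ext x
  by_cases hx : x = 0
  · simp [hx]
  · obtain ⟨c, j, rfl⟩ := hP.exists_smul x hx
    rw [h.semilinear, h'.semilinear, hPΨ]

theorem exists_induces [Finite ι] (hP : IsProjTransversal F P) (τ : F ≃+* F) (Ψ : K ≃+ K)
    (hΨ : ∀ (c : F) (x : K), Ψ (c • x) = τ c • Ψ x) :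
    ∃ (d : ι → F) (I : ι → ι) (e : Equiv.Perm (ι → F)), Induces P τ Ψ d I e := by
  have h1 : ∀ j, ∃ (c : F) (i : ι), Ψ (P j) = c • P i := fun j =>
    hP.exists_smul _ (by simpa using hP.point_ne_zero j)
  choose d I hdI using h1
  have hd : ∀ j, d j ≠ 0 := by
    intro j hj
    have := hdI j
    rw [hj, zero_smul] at this
    exact hP.point_ne_zero j (by simpa using this)
  obtain ⟨hI, hI'⟩ := hP.index_bijective hΨ hd hdI
  let π : Equiv.Perm ι := Equiv.ofBijective I ⟨hI, hI'⟩
  have hπ : ∀ j, π.symm (I j) = j := fun j => π.symm_apply_apply j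
  have hπ' : ∀ j, I (π.symm j) = j := fun j => π.apply_symm_apply j
  let e : Equiv.Perm (ι → F) :=
    { toFun := fun z i => d (π.symm i) * τ (z (π.symm i))
      invFun := fun w j => τ.symm ((d j)⁻¹ * w (I j))
      left_inv := fun z => by
        funext j
        simp [hπ, hd]
      right_inv := fun w => by
        funext i
        simp [hπ', hd] }
  exact ⟨d, I, e, hΨ, hd, hdI, fun z j => by simp [e, hπ]⟩

theorem Induces.one : Induces P (RingEquiv.refl F) (AddEquiv.refl K) 1 id
    (1 : Equiv.Perm (ι → F)) :=
  ⟨by simp, by simp, by simp, by simp⟩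

theorem Induces.mul {τ₁ τ₂ : F ≃+* F} {Ψ₁ Ψ₂ : K ≃+ K} {d₁ d₂ : ι → F} {I₁ I₂ : ι → ι}
    {e₁ e₂ : Equiv.Perm (ι → F)} (h₁ : Induces P τ₁ Ψ₁ d₁ I₁ e₁)
    (h₂ : Induces P τ₂ Ψ₂ d₂ I₂ e₂) :
    Induces P (τ₂.trans τ₁) (Ψ₂.trans Ψ₁) (fun j => τ₁ (d₂ j) * d₁ (I₂ j)) (I₁ ∘ I₂)
      (e₁ * e₂ : Equiv.Perm (ι → F)) where
  semilinear c x := by simp [h₂.semilinear, h₁.semilinear]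
  ne_zero j := by simp [h₁.ne_zero, h₂.ne_zero]
  map_point j := by simp [h₂.map_point, h₁.semilinear, h₁.map_point, smul_smul]
  apply_index z j := by simp [h₁.apply_index, h₂.apply_index]; ring

theorem Induces.inv [Finite ι] (hP : IsProjTransversal F P) {τ : F ≃+* F} {Ψ : K ≃+ K}
    {d : ι → F} {I : ι → ι} {e : Equiv.Perm (ι → F)} (h : Induces P τ Ψ d I e) :
    ∃ (d' : ι → F) (I' : ι → ι),
      Induces P τ.symm Ψ.symm d' I' (e⁻¹ : Equiv.Perm (ι → F)) := by
  have hs : ∀ (c : F) (x : K), Ψ.symm (c • x) = τ.symm c • Ψ.symm x := fun c x =>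
    Ψ.injective (by simp [h.semilinear])
  let π : Equiv.Perm ι := Equiv.ofBijective I (h.bijective hP)
  have hπ : ∀ j, π.symm (I j) = j := fun j => π.symm_apply_apply j
  have hsurj := (h.bijective hP).2
  refine ⟨fun i => τ.symm (d (π.symm i))⁻¹, π.symm, hs, fun i => by simp [h.ne_zero], ?_, ?_⟩
  · intro i
    obtain ⟨j, rfl⟩ := hsurj i
    apply Ψ.injective
    simp [hπ, h.semilinear, h.map_point, smul_smul, h.ne_zero]
  · intro w i
    obtain ⟨j, rfl⟩ := hsurj i
    obtain ⟨z, rfl⟩ := e.surjective w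
    simp [hπ, h.apply_index, h.ne_zero]

end Transversal

section Norm

variable {F K : Type*} [Field F] [Field K] [Algebra F K]

/-- If `σ` is a nontrivial involution of a quadratic extension `K / F` in characteristic two,
then on vectors `x` of norm one the scalar factors `d` in `Ψ x = d • y`, with `y` of norm one and
`Ψ` semilinear, are given by an affine function of the coordinates of `x`. -/
theorem exists_affine_scale [CharP F 2] [PerfectRing F 2] (σ : K →ₐ[F] K)
    (hσ : ∀ x, σ (σ x) = x) (hfix : ∀ x, σ x = x → ∃ c, algebraMap F K c = x)
    (α : K) (hα : σ α ≠ α) (τ : F ≃+* F) (Ψ : K ≃+ K)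
    (hΨ : ∀ (c : F) (x : K), Ψ (c • x) = τ c • Ψ x) :
    ∃ e f g : F, ∀ (γ₀ γ₁ d : F) (y : K),
      (γ₀ • 1 + γ₁ • α) * σ (γ₀ • 1 + γ₁ • α) = 1 → y * σ y = 1 →
      Ψ (γ₀ • 1 + γ₁ • α) = d • y → d = τ (e + f * γ₀ + g * γ₁) := by
  have hK : CharP K 2 := charP_of_injective_algebraMap (algebraMap F K).injective 2
  have hadd : ∀ x : K, x + x = 0 := CharTwo.add_self_eq_zero
  have hsq : ∀ c : F, ∃ b, b ^ 2 = c := fun c =>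
    ⟨(frobeniusEquiv F 2).symm c, by simp⟩
  have hinj := (algebraMap F K).injective
  obtain ⟨T, hT⟩ := hfix (α + σ α) (by rw [map_add, hσ, add_comm])
  obtain ⟨N, hN⟩ := hfix (α * σ α) (by rw [map_mul, hσ, mul_comm])
  have hT0 : T ≠ 0 := by
    rintro rfl
    rw [map_zero] at hT
    exact hα (add_left_cancel (a := α) (by rw [← hT, hadd]))
  obtain ⟨A, hA⟩ := hfix (Ψ 1 * σ (Ψ 1)) (by rw [map_mul, hσ, mul_comm])
  obtain ⟨C, hC⟩ := hfix (Ψ α * σ (Ψ α)) (by rw [map_mul, hσ, mul_comm])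
  obtain ⟨B, hB⟩ := hfix (Ψ 1 * σ (Ψ α) + Ψ α * σ (Ψ 1)) (by
    simp only [map_add, map_mul, hσ]; ring)
  obtain ⟨A, rfl⟩ := τ.surjective A
  obtain ⟨B, rfl⟩ := τ.surjective B
  obtain ⟨C, rfl⟩ := τ.surjective C
  obtain ⟨e, he⟩ := hsq (B / T)
  obtain ⟨f, hf⟩ := hsq (A + B / T)
  obtain ⟨g, hg⟩ := hsq (C + B / T * N)
  refine ⟨e, f, g, fun γ₀ γ₁ d y hx hy hxy => ?_⟩
  have hd : d ^ 2 = τ (γ₀ ^ 2 * A + γ₀ * γ₁ * B + γ₁ ^ 2 * C) := by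
    apply hinj
    have h1 : Ψ (γ₀ • 1 + γ₁ • α) * σ (Ψ (γ₀ • 1 + γ₁ • α)) = algebraMap F K (d ^ 2) := by
      rw [hxy, map_smul, Algebra.smul_def, Algebra.smul_def, map_pow]
      linear_combination (algebraMap F K d) ^ 2 * hy
    rw [← h1]
    simp only [map_add, hΨ, map_smul, map_mul, map_pow, hA, hB, hC]
    simp only [Algebra.smul_def]
    ring
  have hx' : γ₀ ^ 2 + T * γ₀ * γ₁ + γ₁ ^ 2 * N = 1 := by
    apply hinj
    rw [map_one, ← hx]
    simp only [map_add, map_smul, map_mul, map_pow, map_one, hT, hN]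
    simp only [Algebra.smul_def]
    ring
  have h2 : d ^ 2 = (τ (e + f * γ₀ + g * γ₁)) ^ 2 := by
    rw [hd, ← map_pow]
    congr 1
    rw [CharTwo.add_sq, CharTwo.add_sq, mul_pow, mul_pow, he, hf, hg]
    have h3 : (2 : F) = 0 := CharTwo.two_eq_zero
    have h4 : γ₀ * γ₁ = (1 - γ₀ ^ 2 - γ₁ ^ 2 * N) / T := by
      field_simp
      linear_combination hx'
    linear_combination B * h4 - (B / T) * (γ₀ ^ 2 + γ₁ ^ 2 * N) * h3
  exact frobenius_inj F 2 h2

/-- The words orthogonal to the constant word and to all words `j ↦ Tr (δ P j)`. -/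
def balancedWords {ι : Type*} [Fintype ι] (F : Type*) {K : Type*} [Field F] [Field K]
    [Algebra F K] (P : ι → K) : Set (ι → F) :=
  {z | ∑ j, z j = 0 ∧ ∑ j, z j • P j = 0}

theorem dualSet_eq_balancedWords [FiniteDimensional F K] [Algebra.IsSeparable F K] {ι : Type*}
    [Fintype ι] (P : ι → K) :
    dualSet {w : ι → F | ∃ (c : F) (δ : K), ∀ j, w j = c + Algebra.trace F K (δ * P j)} =
      balancedWords F P := by
  ext z
  have key : ∀ δ : K, ∑ j, Algebra.trace F K (δ * P j) * z j =
      Algebra.trace F K (δ * ∑ j, z j • P j) := fun δ => by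
    simp [Finset.mul_sum, mul_comm]
  constructor
  · intro h
    refine ⟨by simpa using h 1 ⟨1, 0, by simp⟩, ?_⟩
    refine (traceForm_nondegenerate F K).2 _ fun δ => ?_
    rw [Algebra.traceForm_apply, ← key]
    exact h (fun j => Algebra.trace F K (δ * P j)) ⟨0, δ, by simp⟩
  · rintro ⟨h1, h2⟩ w ⟨c, δ, hw⟩
    simp only [hw, add_mul, Finset.sum_add_distrib, key, ← Finset.mul_sum, h1, h2]
    simp

variable {ι : Type*} [Fintype ι] {P : ι → K}

theorem Induces.image_balancedWords [Finite F] [CharP F 2] [PerfectRing F 2]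
    (hP : IsProjTransversal F P) (σ : K →ₐ[F] K) (hσ : ∀ x, σ (σ x) = x)
    (hfix : ∀ x, σ x = x → ∃ c, algebraMap F K c = x) (hnorm : ∀ j, P j * σ (P j) = 1)
    {α : K} (hα : σ α ≠ α) (g₀ g₁ : K →ₗ[F] F) (hg : ∀ x, g₀ x • 1 + g₁ x • α = x)
    {τ : F ≃+* F} {Ψ : K ≃+ K} {d : ι → F} {I : ι → ι} {e : (ι → F) → (ι → F)}
    (h : Induces P τ Ψ d I e) : e '' balancedWords F P = balancedWords F P := by
  obtain ⟨r, f, g, hrfg⟩ := exists_affine_scale σ hσ hfix α hα τ Ψ h.semilinear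
  have hd : ∀ j, d j = τ (r + f * g₀ (P j) + g * g₁ (P j)) := fun j =>
    hrfg _ _ _ (P (I j)) (by rw [hg, hnorm]) (hnorm _) (by rw [hg, h.map_point])
  have hsub : e '' balancedWords F P ⊆ balancedWords F P := by
    rintro _ ⟨z, ⟨hz1, hz2⟩, rfl⟩
    constructor
    · rw [← (h.bijective hP).sum_comp]
      simp only [h.apply_index, hd, ← map_mul, ← map_sum]
      rw [map_eq_zero_iff τ τ.injective]
      have h0 := congrArg g₀ hz2
      have h1 := congrArg g₁ hz2
      simp only [map_sum, map_smul, smul_eq_mul, map_zero] at h0 h1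
      calc ∑ j, (r + f * g₀ (P j) + g * g₁ (P j)) * z j
          = r * ∑ j, z j + f * ∑ j, z j * g₀ (P j) + g * ∑ j, z j * g₁ (P j) := by
            simp only [Finset.mul_sum, ← Finset.sum_add_distrib]
            exact Finset.sum_congr rfl fun j _ => by ring
        _ = 0 := by rw [hz1, h0, h1]; simp
    · rw [← (h.bijective hP).sum_comp]
      calc ∑ j, e z (I j) • P (I j) = ∑ j, Ψ (z j • P j) :=
            Finset.sum_congr rfl fun j _ => by
              rw [h.apply_index, h.semilinear, h.map_point, smul_smul, mul_comm]
        _ = 0 := by rw [← map_sum, hz2, map_zero]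
  exact Set.eq_of_subset_of_ncard_le hsub
    (Set.ncard_image_of_injective _ h.injective).ge (Set.toFinite _)

end Norm

section Group

variable {F K ι : Type*} [Field F] [Field K] [Algebra F K] [Finite ι] {P : ι → K}

/-- The group of all monomial maps induced by semilinear permutations of `K`. -/
def inducedSubgroup (hP : IsProjTransversal F P) : Subgroup (Equiv.Perm (ι → F)) where
  carrier := {e | ∃ (τ : F ≃+* F) (Ψ : K ≃+ K) (d : ι → F) (I : ι → ι), Induces P τ Ψ d I e}
  one_mem' := ⟨_, _, _, _, Induces.one⟩
  mul_mem' := by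
    rintro e₁ e₂ ⟨_, _, _, _, h₁⟩ ⟨_, _, _, _, h₂⟩
    exact ⟨_, _, _, _, h₁.mul h₂⟩
  inv_mem' := by
    rintro e ⟨_, _, _, _, h⟩
    exact ⟨_, _, h.inv hP⟩

/-- The semilinear permutation `x ↦ (L x) ^ (p ^ s)`. -/
noncomputable def frobeniusTwist (p : ℕ) [ExpChar K p] [PerfectRing K p] (L : K ≃ₗ[F] K) (s : ℕ) :
    K ≃+ K :=
  L.toAddEquiv.trans (iterateFrobeniusEquiv K p s).toAddEquiv

theorem frobeniusTwist_apply (p : ℕ) [ExpChar K p] [PerfectRing K p] (L : K ≃ₗ[F] K) (s : ℕ)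
    (x : K) : frobeniusTwist p L s x = L x ^ p ^ s := rfl

theorem iterateFrobeniusEquiv_smul (p : ℕ) [ExpChar K p] [PerfectRing K p] [ExpChar F p]
    [PerfectRing F p] (s : ℕ) (c : F) (x : K) :
    iterateFrobeniusEquiv K p s (c • x) =
      iterateFrobeniusEquiv F p s c • iterateFrobeniusEquiv K p s x := by
  simp only [iterateFrobeniusEquiv_def, Algebra.smul_def, mul_pow, map_pow]

theorem frobeniusTwist_smul (p : ℕ) [ExpChar K p] [PerfectRing K p] [ExpChar F p] [PerfectRing F p]
    (L : K ≃ₗ[F] K) (s : ℕ) (c : F) (x : K) :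
    frobeniusTwist p L s (c • x) = iterateFrobeniusEquiv F p s c • frobeniusTwist p L s x := by
  rw [frobeniusTwist_apply, map_smul]
  exact iterateFrobeniusEquiv_smul p s c (L x)

theorem bijective_iterateFrobeniusEquiv (k : Type*) [Field k] [Finite k] (p m : ℕ)
    [Fact p.Prime] [CharP k p] [ExpChar k p] [PerfectRing k p] (hk : Nat.card k = p ^ m) :
    Function.Bijective (fun s : Fin m => iterateFrobeniusEquiv k p s) := by
  let := ZMod.algebra k p
  have hfin : Module.finrank (ZMod p) k = m := by
    have h := Module.natCard_eq_pow_finrank (K := ZMod p) (V := k)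
    rw [hk, Nat.card_zmod] at h
    exact (Nat.pow_right_injective (Fact.out : p.Prime).two_le h).symm
  subst hfin
  have key := FiniteField.bijective_frobeniusAlgEquivOfAlgebraic_pow (ZMod p) k
  have happ : ∀ (s : ℕ) (x : k),
      (FiniteField.frobeniusAlgEquivOfAlgebraic (ZMod p) k ^ s) x =
        iterateFrobeniusEquiv k p s x := fun s x => by
    rw [AlgEquiv.coe_pow, FiniteField.coe_frobeniusAlgEquivOfAlgebraic_iterate, ZMod.card,
      iterateFrobeniusEquiv_def]
  constructor
  · intro s t hst
    apply key.1
    ext x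
    change (FiniteField.frobeniusAlgEquivOfAlgebraic (ZMod p) k ^ (s : ℕ)) x =
      (FiniteField.frobeniusAlgEquivOfAlgebraic (ZMod p) k ^ (t : ℕ)) x
    rw [happ, happ]
    exact congrArg (fun f : k ≃+* k => f x) hst
  · intro τ
    obtain ⟨s, hs⟩ := key.2 (AlgEquiv.ofRingEquiv (f := τ) fun c => by
      have := RingHom.congr_fun (Subsingleton.elim
        ((τ : k →+* k).comp (algebraMap (ZMod p) k)) (algebraMap (ZMod p) k)) c
      exact this)
    refine ⟨s, ?_⟩
    ext x
    have := congrArg (fun f : k ≃ₐ[ZMod p] k => f x) hs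
    change (FiniteField.frobeniusAlgEquivOfAlgebraic (ZMod p) k ^ (s : ℕ)) x = τ x at this
    rw [happ] at this
    exact this

theorem card_inducedSubgroup [Finite F] (p m : ℕ) [Fact p.Prime] [CharP F p] [ExpChar F p]
    [PerfectRing F p] [ExpChar K p] [PerfectRing K p] (hF : Nat.card F = p ^ m)
    (hP : IsProjTransversal F P) :
    Nat.card (inducedSubgroup hP) = m * Nat.card (K ≃ₗ[F] K) := by
  have hbij := bijective_iterateFrobeniusEquiv F p m hF
  choose d I e h using fun (s : Fin m) (L : K ≃ₗ[F] K) =>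
    exists_induces hP (iterateFrobeniusEquiv F p s) (frobeniusTwist p L s)
      (frobeniusTwist_smul p L s)
  have hcard : Nat.card (Fin m × (K ≃ₗ[F] K)) = Nat.card (inducedSubgroup hP) := by
    refine Nat.card_eq_of_bijective
      (fun x => (⟨e x.1 x.2, _, _, _, _, h x.1 x.2⟩ : inducedSubgroup hP)) ⟨?_, ?_⟩
    · rintro ⟨s, L⟩ ⟨s', L'⟩ hss
      have he : e s L = e s' L' := congrArg Subtype.val hss
      have h' := h s' L'
      rw [← he] at h'
      obtain ⟨hτ, hΨ⟩ := (h s L).unique hP h'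
      obtain rfl : s = s' := hbij.1 hτ
      congr 1
      ext x
      have := congrArg (fun f : K ≃+ K => f x) hΨ
      exact (iterateFrobeniusEquiv K p s).injective this
    · rintro ⟨f, τ, Ψ, d', I', hf⟩
      obtain ⟨s, rfl⟩ := hbij.2 τ
      let φ := iterateFrobeniusEquiv K p s
      let L : K ≃ₗ[F] K :=
        { Ψ.trans φ.symm.toAddEquiv with
          map_smul' := fun c x => by
            apply φ.injective
            change φ (φ.symm (Ψ (c • x))) = φ (c • φ.symm (Ψ x))
            rw [hf.semilinear, iterateFrobeniusEquiv_smul p, φ.apply_symm_apply,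
              φ.apply_symm_apply] }
      have hL : frobeniusTwist p L s = Ψ := by
        ext x
        exact φ.apply_symm_apply (Ψ x)
      refine ⟨⟨s, L⟩, Subtype.ext (Equiv.ext fun z => funext fun i => ?_)⟩
      have hd : Induces P (iterateFrobeniusEquiv F p s) Ψ (d s L) (I s L) (e s L) := by
        have := h s L
        rwa [hL] at this
      obtain ⟨j, rfl⟩ := (hf.bijective hP).2 i
      have h1 := hd.map_point j
      rw [hf.map_point] at h1
      obtain ⟨h2, h3⟩ := hP.smul_inj _ _ _ _ (hf.ne_zero j) h1
      change e s L z (I' j) = f z (I' j)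
      rw [hf.apply_index, h3, hd.apply_index, h2]
  rw [← hcard, Nat.card_prod, Nat.card_fin]

theorem card_linearEquiv_of_finrank_eq_two (F V : Type*) [Field F] [Fintype F] [AddCommGroup V]
    [Module F V] [FiniteDimensional F V] (h : Module.finrank F V = 2) :
    Nat.card (V ≃ₗ[F] V) =
      (Fintype.card F ^ 2 - 1) * (Fintype.card F ^ 2 - Fintype.card F) := by
  have e := (Matrix.GeneralLinearGroup.toLin' (Module.finBasisOfFinrankEq F V h)).trans
    (LinearMap.GeneralLinearGroup.generalLinearEquiv F V)
  rw [← Nat.card_congr e.toEquiv, Matrix.card_GL_field, Fin.prod_univ_two]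
  simp

end Group

section QuadraticFiniteField

variable {F K : Type*} [Field F] [Field K] [Fintype F] [Fintype K] [Algebra F K]

theorem frobeniusAlgHom_frobeniusAlgHom (hcard : Fintype.card K = Fintype.card F ^ 2) (x : K) :
    FiniteField.frobeniusAlgHom F K (FiniteField.frobeniusAlgHom F K x) = x := by
  simp only [FiniteField.coe_frobeniusAlgHom]
  rw [← pow_mul, ← sq, ← hcard, FiniteField.pow_card]

theorem exists_algebraMap_eq_of_frobenius_fixed {α : K}
    (hα : FiniteField.frobeniusAlgHom F K α ≠ α)
    (hspan : ∀ x : K, ∃ a b : F, a • 1 + b • α = x) (x : K)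
    (hx : FiniteField.frobeniusAlgHom F K x = x) : ∃ c, algebraMap F K c = x := by
  obtain ⟨a, b, rfl⟩ := hspan x
  simp only [map_add, map_smul, map_one, add_right_inj] at hx
  obtain rfl : b = 0 := by
    by_contra hb
    exact hα (smul_right_injective K hb hx)
  exact ⟨a, by simp [Algebra.smul_def]⟩

theorem frobeniusAlgHom_ne_self {α : K} (hcard : Fintype.card K = Fintype.card F ^ 2)
    (hα : orderOf α = Fintype.card K - 1) : FiniteField.frobeniusAlgHom F K α ≠ α := by
  intro h
  simp only [FiniteField.coe_frobeniusAlgHom] at h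
  have h2 : 2 ≤ Fintype.card F := Fintype.one_lt_card
  have h4 : Fintype.card F * 2 ≤ Fintype.card K := by rw [hcard, sq]; gcongr
  have hα0 : α ≠ 0 := by
    rintro rfl
    rw [orderOf_zero] at hα
    omega
  have h1 : α ^ (Fintype.card F - 1) = 1 := by
    apply mul_right_cancel₀ hα0
    rw [← pow_succ, Nat.sub_add_cancel (by omega), h, one_mul]
  have := Nat.le_of_dvd (by omega) (orderOf_dvd_of_pow_eq_one h1)
  omega

theorem isProjTransversal_pow [CharP F 2] {ζ : K} {n : ℕ} (hn : n = Fintype.card F + 1)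
    (hζ : IsPrimitiveRoot ζ n) (hcard : Fintype.card K = Fintype.card F ^ 2)
    (hfix : ∀ x, FiniteField.frobeniusAlgHom F K x = x → ∃ c, algebraMap F K c = x) :
    IsProjTransversal F (fun j : Fin n => ζ ^ ((j : ℕ) + 1)) := by
  have : NeZero n := ⟨by omega⟩
  constructor
  · intro x hx
    obtain ⟨b, hb⟩ := hfix (x * FiniteField.frobeniusAlgHom F K x) (by
      rw [map_mul, frobeniusAlgHom_frobeniusAlgHom hcard, mul_comm])
    obtain ⟨c, rfl⟩ : ∃ c, c ^ 2 = b := ⟨(frobeniusEquiv F 2).symm b, by simp⟩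
    simp only [FiniteField.coe_frobeniusAlgHom] at hb
    rw [← pow_succ', ← hn] at hb
    have hc : c ≠ 0 := by
      rintro rfl
      simp at hb
      exact hx (pow_eq_zero_iff (NeZero.ne n) |>.1 hb.symm)
    have hc' : c ^ n = c ^ 2 := by rw [hn, pow_succ, FiniteField.pow_card, sq]
    have hy : (c⁻¹ • x) ^ n = 1 := by
      rw [smul_pow, ← hb, inv_pow, hc', Algebra.smul_def, ← map_mul, inv_mul_cancel₀ (by simpa),
        map_one]
    obtain ⟨i, hi, hix⟩ := hζ.eq_pow_of_pow_eq_one hy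
    have hx' : x = c • ζ ^ i := by rw [hix, smul_inv_smul₀ hc]
    rcases Nat.eq_zero_or_pos i with rfl | hi0
    · refine ⟨c, ⟨n - 1, by omega⟩, ?_⟩
      simp only
      rw [hx', Nat.sub_add_cancel (by omega), hζ.pow_eq_one, pow_zero]
    · refine ⟨c, ⟨i - 1, by omega⟩, ?_⟩
      simp only
      rw [hx', Nat.sub_add_cancel (by omega)]
  · intro c c' j j' hc h
    have hpow : ∀ (c : F) (j : ℕ), (c • ζ ^ j) ^ n = algebraMap F K (c ^ 2) := fun c j => by
      rw [smul_pow, ← pow_mul, mul_comm, pow_mul, hζ.pow_eq_one, one_pow, Algebra.smul_def,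
        mul_one, hn, pow_succ, FiniteField.pow_card, sq]
    have h2 := congrArg (· ^ n) h
    simp only [hpow] at h2
    obtain rfl : c = c' := frobenius_inj F 2 ((algebraMap F K).injective h2)
    refine ⟨rfl, ?_⟩
    have h3 : ζ ^ (j : ℕ) = ζ ^ (j' : ℕ) := by
      have h4 := smul_right_injective K hc h
      exact mul_right_cancel₀ (hζ.ne_zero (NeZero.ne n)) (by simpa only [pow_succ] using h4)
    exact Fin.ext (hζ.pow_inj j.2 j'.2 h3)

theorem finrank_eq_two_of_card (hcard : Fintype.card K = Fintype.card F ^ 2) :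
    Module.finrank F K = 2 := by
  have h := Module.card_eq_pow_finrank (K := F) (V := K)
  rw [hcard] at h
  exact (Nat.pow_right_injective Fintype.one_lt_card h).symm

end QuadraticFiniteField

theorem Induces.mem_autSSet {F K ι : Type*} [Field F] [Field K] [Algebra F K] [Finite ι]
    {P : ι → K} (hP : IsProjTransversal F P) {τ : F ≃+* F} {Ψ : K ≃+ K} {d : ι → F} {I : ι → ι}
    {e : Equiv.Perm (ι → F)} (h : Induces P τ Ψ d I e) {C : Set (ι → F)} (hC : e '' C = C) :
    e ∈ autSSet C := by
  let π : Equiv.Perm ι := Equiv.ofBijective I (h.bijective hP)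
  refine ⟨⟨π, τ, fun i => d (π⁻¹ i), fun i => h.ne_zero _, fun v i => ?_⟩, hC⟩
  obtain ⟨j, rfl⟩ := π.surjective i
  have hj : π⁻¹ (π j) = j := π.symm_apply_apply j
  simp only [hj]
  exact h.apply_index v j

/-- Let `m ≥ 1`, `q = 2^m`, `K = F_{q²}` with basis `{1, α}` over `F = F_q`
(with coordinate functions `g0`, `g1`), `ζ = α^{q−1}`, and `M_q = (M_q^⊥)^⊥`.  For
`a, a′, b, b′ ∈ F` with `ab′ + a′b ≠ 0` and `t = 2^s`, `0 ≤ s ≤ m−1`, define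
`Ψ(γ₀+γ₁α) = ((aγ₀+a′γ₁) + (bγ₀+b′γ₁)α)^t`, and write `Ψ(ζ^j) = d_j ζ^{i_j}` with
`d_j ∈ F^×`.  Then `j ↦ i_j` is a permutation, and the map `ψ` sending `z` to the word
whose `i_j`-th coordinate is `d_j·z_j^t` satisfies `ψ(M_q) = M_q`, i.e. it is a semilinear
automorphism of `M_q`.  Distinct tuples `(a, a′, b, b′, t)` yield distinct maps `ψ`;
consequently `AutS(M_q)` contains a subgroup of order `m·(q²−1)·(q²−q) = |ΓL(2,q)|`. -/
theorem stmt_12 (m q : ℕ) (hm : 1 ≤ m) (hq : q = 2 ^ m)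
    (F K : Type) [Field F] [Field K] [Fintype F] [Fintype K] [Algebra F K]
    (hcF : Fintype.card F = q) (hcK : Fintype.card K = q ^ 2)
    (α : K) (hα : orderOf α = q ^ 2 - 1)
    (ζ : K) (hζ : ζ = α ^ (q - 1))
    (Mdual : Set (Fin (q + 1) → F))
    (hM : Mdual = {w | ∃ (c : F) (δ : K), ∀ j : Fin (q + 1),
        w j = c + Algebra.trace F K (δ * ζ ^ ((j : ℕ) + 1))})
    (g0 g1 : K → F)
    (hcoord : ∀ x : K, algebraMap F K (g0 x) + algebraMap F K (g1 x) * α = x)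
    (huniq : ∀ (x : K) (γ0 γ1 : F),
      algebraMap F K γ0 + algebraMap F K γ1 * α = x → γ0 = g0 x ∧ γ1 = g1 x) :
    (∀ (a a' b b' : F) (s : ℕ), s ≤ m - 1 → a * b' + a' * b ≠ 0 →
      ∀ (d : Fin (q + 1) → F) (I : Fin (q + 1) → Fin (q + 1)),
        (∀ j, d j ≠ 0) →
        (∀ j : Fin (q + 1),
          (algebraMap F K (a * g0 (ζ ^ ((j : ℕ) + 1)) + a' * g1 (ζ ^ ((j : ℕ) + 1)))
            + algebraMap F K (b * g0 (ζ ^ ((j : ℕ) + 1)) + b' * g1 (ζ ^ ((j : ℕ) + 1))) * α)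
              ^ (2 ^ s)
            = algebraMap F K (d j) * ζ ^ ((I j : ℕ) + 1)) →
        Function.Bijective I ∧
        ∀ ψ : (Fin (q + 1) → F) → (Fin (q + 1) → F),
          (∀ (z : Fin (q + 1) → F) (j : Fin (q + 1)), ψ z (I j) = d j * z j ^ (2 ^ s)) →
          ψ '' dualSet Mdual = dualSet Mdual) ∧
    (∀ (a₁ a₁' b₁ b₁' : F) (s₁ : ℕ) (a₂ a₂' b₂ b₂' : F) (s₂ : ℕ),
      s₁ ≤ m - 1 → a₁ * b₁' + a₁' * b₁ ≠ 0 →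
      s₂ ≤ m - 1 → a₂ * b₂' + a₂' * b₂ ≠ 0 →
      ∀ (d₁ : Fin (q + 1) → F) (I₁ : Fin (q + 1) → Fin (q + 1))
        (d₂ : Fin (q + 1) → F) (I₂ : Fin (q + 1) → Fin (q + 1)),
        (∀ j, d₁ j ≠ 0) → (∀ j, d₂ j ≠ 0) →
        (∀ j : Fin (q + 1),
          (algebraMap F K (a₁ * g0 (ζ ^ ((j : ℕ) + 1)) + a₁' * g1 (ζ ^ ((j : ℕ) + 1)))
            + algebraMap F K (b₁ * g0 (ζ ^ ((j : ℕ) + 1)) + b₁' * g1 (ζ ^ ((j : ℕ) + 1))) * α)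
              ^ (2 ^ s₁)
            = algebraMap F K (d₁ j) * ζ ^ ((I₁ j : ℕ) + 1)) →
        (∀ j : Fin (q + 1),
          (algebraMap F K (a₂ * g0 (ζ ^ ((j : ℕ) + 1)) + a₂' * g1 (ζ ^ ((j : ℕ) + 1)))
            + algebraMap F K (b₂ * g0 (ζ ^ ((j : ℕ) + 1)) + b₂' * g1 (ζ ^ ((j : ℕ) + 1))) * α)
              ^ (2 ^ s₂)
            = algebraMap F K (d₂ j) * ζ ^ ((I₂ j : ℕ) + 1)) →
        ∀ (ψ₁ ψ₂ : (Fin (q + 1) → F) → (Fin (q + 1) → F)),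
          (∀ z j, ψ₁ z (I₁ j) = d₁ j * z j ^ (2 ^ s₁)) →
          (∀ z j, ψ₂ z (I₂ j) = d₂ j * z j ^ (2 ^ s₂)) →
          (a₁, a₁', b₁, b₁', 2 ^ s₁) ≠ (a₂, a₂', b₂, b₂', 2 ^ s₂) →
          ψ₁ ≠ ψ₂) ∧
    (∃ G : Subgroup (Equiv.Perm (Fin (q + 1) → F)),
      (G : Set (Equiv.Perm (Fin (q + 1) → F))) ⊆ autSSet (dualSet Mdual) ∧
      Nat.card G = m * (q ^ 2 - 1) * (q ^ 2 - q)) := by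
  subst hq
  have hF2 : CharP F 2 := charP_of_card_eq_prime_pow hcF
  have hcK' : Fintype.card K = Fintype.card F ^ 2 := by rw [hcK, hcF]
  have hK2 : CharP K 2 := charP_of_injective_algebraMap (algebraMap F K).injective 2
  have hg0 : ∀ γ₀ γ₁ : F, g0 (algebraMap F K γ₀ + algebraMap F K γ₁ * α) = γ₀ :=
    fun γ₀ γ₁ => ((huniq _ γ₀ γ₁ rfl).1).symm
  have hg1 : ∀ γ₀ γ₁ : F, g1 (algebraMap F K γ₀ + algebraMap F K γ₁ * α) = γ₁ :=
    fun γ₀ γ₁ => ((huniq _ γ₀ γ₁ rfl).2).symm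
  have hadd : ∀ x y : K, g0 (x + y) = g0 x + g0 y ∧ g1 (x + y) = g1 x + g1 y := fun x y => by
    obtain ⟨h0, h1⟩ := huniq (x + y) (g0 x + g0 y) (g1 x + g1 y) (by
      conv_rhs => rw [← hcoord x, ← hcoord y]
      rw [map_add, map_add]; ring)
    exact ⟨h0.symm, h1.symm⟩
  have hsmul : ∀ (c : F) (x : K), g0 (c • x) = c • g0 x ∧ g1 (c • x) = c • g1 x := fun c x => by
    obtain ⟨h0, h1⟩ := huniq (c • x) (c • g0 x) (c • g1 x) (by
      conv_rhs => rw [← hcoord x]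
      simp only [smul_eq_mul, map_mul, Algebra.smul_def]; ring)
    exact ⟨h0.symm, h1.symm⟩
  let γ₀ : K →ₗ[F] F :=
    { toFun := g0, map_add' := fun x y => (hadd x y).1, map_smul' := fun c x => (hsmul c x).1 }
  let γ₁ : K →ₗ[F] F :=
    { toFun := g1, map_add' := fun x y => (hadd x y).2, map_smul' := fun c x => (hsmul c x).2 }
  have hγ : ∀ x, γ₀ x • 1 + γ₁ x • α = x := fun x => by
    simpa [Algebra.smul_def] using! hcoord x
  have hfrob : FiniteField.frobeniusAlgHom F K α ≠ α :=
    frobeniusAlgHom_ne_self hcK' (by rw [hα, hcK])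
  have hfix := exists_algebraMap_eq_of_frobenius_fixed hfrob fun x => ⟨γ₀ x, γ₁ x, hγ x⟩
  have hprim : IsPrimitiveRoot ζ (2 ^ m + 1) := by
    have h1 : 1 < 2 ^ m := Nat.one_lt_two_pow (by omega)
    have hfac : (2 ^ m) ^ 2 - 1 = (2 ^ m - 1) * (2 ^ m + 1) := by
      rw [mul_comm, ← Nat.sq_sub_sq, one_pow]
    have hpos : 0 < (2 ^ m) ^ 2 - 1 := by
      rw [hfac]
      exact Nat.mul_pos (by omega) (by omega)
    rw [hζ]
    exact (hα ▸ IsPrimitiveRoot.orderOf α).pow hpos hfac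
  let P : Fin (2 ^ m + 1) → K := fun j => ζ ^ ((j : ℕ) + 1)
  have hP : IsProjTransversal F P :=
    isProjTransversal_pow (by rw [hcF]) hprim hcK' hfix
  have hnorm : ∀ j, P j * FiniteField.frobeniusAlgHom F K (P j) = 1 := fun j => by
    simp only [FiniteField.coe_frobeniusAlgHom]
    rw [← pow_succ', hcF, ← pow_mul, mul_comm, pow_mul, hprim.pow_eq_one, one_pow]
  have hdual : dualSet Mdual = balancedWords F P := by
    rw [hM]
    exact dualSet_eq_balancedWords P
  have himage : ∀ {τ : F ≃+* F} {Ψ : K ≃+ K} {d : Fin (2 ^ m + 1) → F}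
      {I : Fin (2 ^ m + 1) → Fin (2 ^ m + 1)}
      {e : (Fin (2 ^ m + 1) → F) → (Fin (2 ^ m + 1) → F)}, Induces P τ Ψ d I e →
      e '' dualSet Mdual = dualSet Mdual := fun h => by
    rw [hdual]
    exact h.image_balancedWords hP _ (frobeniusAlgHom_frobeniusAlgHom hcK') hfix hnorm hfrob
      γ₀ γ₁ hγ
  have hlin : ∀ a a' b b' : F, a * b' + a' * b ≠ 0 → ∃ L : K ≃ₗ[F] K, ∀ x,
      L x = algebraMap F K (a * g0 x + a' * g1 x) + algebraMap F K (b * g0 x + b' * g1 x) * α := by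
    intro a a' b b' hdet
    let L : K →ₗ[F] K := (a • γ₀ + a' • γ₁).smulRight 1 + (b • γ₀ + b' • γ₁).smulRight α
    have hL : ∀ x, L x =
        algebraMap F K (a * g0 x + a' * g1 x) + algebraMap F K (b * g0 x + b' * g1 x) * α :=
      fun x => by simp [L, γ₀, γ₁, Algebra.smul_def]
    have hinj : Function.Injective L := by
      rw [injective_iff_map_eq_zero]
      intro x hx
      rw [hL] at hx
      obtain ⟨h00, h01⟩ := huniq 0 0 0 (by simp)
      obtain ⟨h0, h1⟩ := huniq 0 _ _ hx
      rw [← h00] at h0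
      rw [← h01] at h1
      have h2 : (2 : F) = 0 := CharTwo.two_eq_zero
      have hx0 : g0 x = 0 := (mul_eq_zero.mp (by
        linear_combination b' * h0 + a' * h1 - a' * b' * g1 x * h2 :
          (a * b' + a' * b) * g0 x = 0)).resolve_left hdet
      have hx1 : g1 x = 0 := (mul_eq_zero.mp (by
        linear_combination b * h0 + a * h1 - a * b * g0 x * h2 :
          (a * b' + a' * b) * g1 x = 0)).resolve_left hdet
      rw [← hcoord x, hx0, hx1]
      simp
    exact ⟨LinearEquiv.ofInjectiveEndo L hinj, hL⟩
  have hind : ∀ (L : K ≃ₗ[F] K) (s : ℕ) (d : Fin (2 ^ m + 1) → F)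
      (I : Fin (2 ^ m + 1) → Fin (2 ^ m + 1))
      (ψ : (Fin (2 ^ m + 1) → F) → (Fin (2 ^ m + 1) → F)), (∀ j, d j ≠ 0) →
      (∀ j, L (P j) ^ 2 ^ s = algebraMap F K (d j) * P (I j)) →
      (∀ z j, ψ z (I j) = d j * z j ^ 2 ^ s) →
      Induces P (iterateFrobeniusEquiv F 2 s) (frobeniusTwist 2 L s) d I ψ :=
    fun L s d I ψ hd hdI hψ => ⟨frobeniusTwist_smul 2 L s, hd, fun j => by
      rw [frobeniusTwist_apply, hdI, Algebra.smul_def], hψ⟩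
  refine ⟨?_, ?_, ?_⟩
  · intro a a' b b' s hs hdet d I hd hdI
    obtain ⟨L, hL⟩ := hlin a a' b b' hdet
    have hdI' : ∀ j, L (P j) ^ 2 ^ s = algebraMap F K (d j) * P (I j) := fun j => by
      rw [hL]
      exact hdI j
    refine ⟨hP.index_bijective (frobeniusTwist_smul 2 L s) hd fun j => ?_, fun ψ hψ =>
      himage (hind L s d I ψ hd hdI' hψ)⟩
    rw [frobeniusTwist_apply, hdI', Algebra.smul_def]
  · intro a₁ a₁' b₁ b₁' s₁ a₂ a₂' b₂ b₂' s₂ hs₁ hdet₁ hs₂ hdet₂ d₁ I₁ d₂ I₂ hd₁ hd₂ hdI₁ hdI₂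
      ψ₁ ψ₂ hψ₁ hψ₂ hne hψ
    obtain ⟨L₁, hL₁⟩ := hlin a₁ a₁' b₁ b₁' hdet₁
    obtain ⟨L₂, hL₂⟩ := hlin a₂ a₂' b₂ b₂' hdet₂
    have h₁ := hind L₁ s₁ d₁ I₁ ψ₁ hd₁ (fun j => by rw [hL₁]; exact hdI₁ j) hψ₁
    have h₂ := hind L₂ s₂ d₂ I₂ ψ₂ hd₂ (fun j => by rw [hL₂]; exact hdI₂ j) hψ₂
    rw [← hψ] at h₂
    obtain ⟨hτ, hΨ⟩ := h₁.unique hP h₂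
    have hs : (⟨s₁, by omega⟩ : Fin m) = ⟨s₂, by omega⟩ :=
      (bijective_iterateFrobeniusEquiv F 2 m (by rw [Nat.card_eq_fintype_card, hcF])).1 hτ
    obtain rfl : s₁ = s₂ := congrArg Fin.val hs
    have hLL : ∀ x, L₁ x = L₂ x := fun x =>
      (iterateFrobeniusEquiv K 2 s₁).injective (DFunLike.congr_fun hΨ x)
    have hcoef : ∀ x, a₁ * g0 x + a₁' * g1 x = a₂ * g0 x + a₂' * g1 x ∧
        b₁ * g0 x + b₁' * g1 x = b₂ * g0 x + b₂' * g1 x := fun x => by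
      have h := hLL x
      rw [hL₁, hL₂] at h
      obtain ⟨h0, h1⟩ := huniq _ _ _ h
      rw [hg0] at h0
      rw [hg1] at h1
      exact ⟨h0, h1⟩
    obtain ⟨h10, h11⟩ := huniq 1 1 0 (by simp)
    obtain ⟨hα0, hα1⟩ := huniq α 0 1 (by simp)
    obtain ⟨ha, hb⟩ := hcoef 1
    obtain ⟨ha', hb'⟩ := hcoef α
    simp only [← h10, ← h11, mul_one, mul_zero, add_zero] at ha hb
    simp only [← hα0, ← hα1, mul_one, mul_zero, zero_add] at ha' hb'
    exact hne (by rw [ha, hb, ha', hb'])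
  · refine ⟨inducedSubgroup hP, ?_, ?_⟩
    · rintro e ⟨τ, Ψ, d, I, h⟩
      exact h.mem_autSSet hP (himage h)
    · rw [card_inducedSubgroup 2 m (by rw [Nat.card_eq_fintype_card, hcF]) hP,
        card_linearEquiv_of_finrank_eq_two F K (finrank_eq_two_of_card hcK'), hcF, mul_assoc]
end
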